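/- Let f satisfy Condition B with constant K, let φ be a branching mechanism satisfying Grey's condition whose Lévy measure m satisfies ∫_{(1,∞)} f(z) m(dz) < ∞, and let (Q_t)_{t≥0} be the transition semigroup of the CB-process with branching mechanism φ. Then for every x ≥ 0, the function t ↦ ∫_{[0,∞)} f(z) Q_t(x,dz) is finite for every t ≥ 0 and locally bounded on [0,∞) (i.e., bounded on every compact interval [0,T]). -/

import Mathlib

open MeasureTheory Set Filter

noncomputable section

/-- A positive continuous function on `[0,∞)` satisfying Condition A:
there exist `c ≥ 0` and `K > 0` such that `f` is convex on `[c,∞)`,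
`f (x*y) ≤ K * f x * f y` for `x, y ∈ [c,∞)`, and `f` is bounded on `[0,c)`. -/
def ConditionA (f : ℝ → ℝ) : Prop :=
  ContinuousOn f (Set.Ici 0) ∧ (∀ x, 0 ≤ x → 0 < f x) ∧
  ∃ c, 0 ≤ c ∧ ∃ K, 0 < K ∧
    ConvexOn ℝ (Set.Ici c) f ∧
    (∀ x y, c ≤ x → c ≤ y → f (x * y) ≤ K * f x * f y) ∧
    ∃ M, ∀ x, 0 ≤ x → x < c → f x ≤ M

/-- Condition B with constant `K`: `f` is convex and nondecreasing on `[0,∞)`,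
submultiplicative up to the constant `K`, and `f > 1` on `[0,∞)`. -/
def ConditionB (f : ℝ → ℝ) (K : ℝ) : Prop :=
  0 < K ∧ ConvexOn ℝ (Set.Ici 0) f ∧ MonotoneOn f (Set.Ici 0) ∧
  (∀ x y, 0 ≤ x → 0 ≤ y → f (x * y) ≤ K * f x * f y) ∧
  (∀ x, 0 ≤ x → 1 < f x)

/-- `φ` is a branching mechanism with parameters `β ∈ ℝ`, `σ ≥ 0` and Lévy
measure `m` (a σ-finite measure carried by `(0,∞)` with `∫ 1 ∧ z² m(dz) < ∞`):
`φ(λ) = βλ + σ²λ²/2 + ∫ (e^{-zλ} - 1 + zλ 1_{z ≤ 1}) m(dz)`. -/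
structure IsBranchingMechanism (φ : ℝ → ℝ) (β σ : ℝ) (m : Measure ℝ) : Prop where
  sigma_nonneg : 0 ≤ σ
  sigmaFinite : SigmaFinite m
  carrier : m (Set.Iic 0) = 0
  levy_finite : ∫⁻ z, ENNReal.ofReal (min 1 (z ^ 2)) ∂m < ⊤
  form : ∀ l, 0 ≤ l →
    φ l = β * l + σ ^ 2 * l ^ 2 / 2
      + ∫ z, (Real.exp (-(z * l)) - 1 + (if z ≤ 1 then z * l else 0)) ∂m

/-- Grey's condition: `∫_{0+} φ(λ)⁻¹ dλ = ∞`, i.e. `φ⁻¹` fails to be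
integrable on every right neighbourhood of `0`. -/
def GreyCondition (φ : ℝ → ℝ) : Prop :=
  ∀ ε, 0 < ε → ¬ IntegrableOn (fun l => (φ l)⁻¹) (Set.Ioo 0 ε) volume

/-- `v t l` is the nonnegative solution of `v_t(λ) = λ - ∫_0^t φ(v_s(λ)) ds`. -/
def IsCumulant (φ : ℝ → ℝ) (v : ℝ → ℝ → ℝ) : Prop :=
  ∀ l, 0 ≤ l → ∀ t, 0 ≤ t →
    0 ≤ v t l ∧ v t l = l - ∫ s in (0:ℝ)..t, φ (v s l)

/-- `(Q t)_{t ≥ 0}` is the transition semigroup of the CB-process with cumulant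
`v`: each `Q t x` is a probability measure on `[0,∞)` with Laplace transform
`∫ e^{-λ y} Q_t(x, dy) = e^{-x v_t(λ)}`. -/
def IsCBSemigroup (v : ℝ → ℝ → ℝ) (Q : ℝ → ℝ → Measure ℝ) : Prop :=
  ∀ t x, 0 ≤ t → 0 ≤ x →
    IsProbabilityMeasure (Q t x) ∧ Q t x (Set.Iio 0) = 0 ∧
    ∀ l, 0 ≤ l → ∫ y, Real.exp (-(l * y)) ∂(Q t x) = Real.exp (-(x * v t l))

/-- `ψ` is an immigration mechanism with drift `h ≥ 0` and immigration measure
`ν` (a σ-finite measure carried by `(0,∞)` with `∫ 1 ∧ z ν(dz) < ∞`):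
`ψ(λ) = hλ + ∫ (1 - e^{-λz}) ν(dz)`. -/
structure IsImmigrationMechanism (ψ : ℝ → ℝ) (h : ℝ) (ν : Measure ℝ) : Prop where
  h_nonneg : 0 ≤ h
  sigmaFinite : SigmaFinite ν
  carrier : ν (Set.Iic 0) = 0
  levy_finite : ∫⁻ z, ENNReal.ofReal (min 1 z) ∂ν < ⊤
  form : ∀ l, 0 ≤ l → ψ l = h * l + ∫ z, (1 - Real.exp (-(l * z))) ∂ν

/-- `(Q^γ t)_{t ≥ 0}` is the transition semigroup of the CBI-process with
cumulant `v` and immigration mechanism `ψ`: each `Qγ t x` is a probability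
measure on `[0,∞)` with Laplace transform
`∫ e^{-λ y} Q^γ_t(x, dy) = exp(-x v_t(λ) - ∫_0^t ψ(v_s(λ)) ds)`. -/
def IsCBISemigroup (v : ℝ → ℝ → ℝ) (ψ : ℝ → ℝ) (Qγ : ℝ → ℝ → Measure ℝ) : Prop :=
  ∀ t x, 0 ≤ t → 0 ≤ x →
    IsProbabilityMeasure (Qγ t x) ∧ Qγ t x (Set.Iio 0) = 0 ∧
    ∀ l, 0 ≤ l →
      ∫ y, Real.exp (-(l * y)) ∂(Qγ t x)
        = Real.exp (-(x * v t l) - ∫ s in (0:ℝ)..t, ψ (v s l))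

/-!
Let `h` be the continuous nondecreasing function on the line that agrees with `f` on `[0, ∞)` and
is constant on `(-∞, 0]`, and suppose that `f` is not constant. Then `f` grows at least linearly,
and convexity and submultiplicativity bound the increments of `h` by
`y (h(y + z) - h(y)) ≤ D f(z) h(y)`, so that a twice averaged `h`, call it `g`, satisfies
`L g ≤ B g` for the generator `L` of the CB-process. The bound on increments survives the truncation
of `h` at level `n`, with the same `D`; then `g` is constant near infinity, and it can be
approximated, together with its first two derivatives, by linear combinations of the functions
`e_λ(y) = e^{-λy}`. For these the forward equation `d/dt ∫ e_λ dQ_t = ∫ L e_λ dQ_t` is read off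
from the Laplace transform of `Q_t`, through the flow property `v_{t+s} = v_t ∘ v_s`, and
Grönwall's inequality gives `∫ g dQ_t(x, ·) ≤ g(x) e^{Bt}`. Letting `n → ∞` gives
`∫ f dQ_t(x, ·) ≤ A f(x) e^{Bt}`.
-/

section Primitive

variable {E : Type*} [NormedAddCommGroup E] (h : ℝ → E) (a : ℝ)

theorem ordConnected_setOf_intervalIntegrable :
    OrdConnected {t | a ≤ t ∧ IntervalIntegrable h volume a t} := by
  refine ⟨fun p hp q hq r hr => ⟨hp.1.trans hr.1, hq.2.mono_set ?_⟩⟩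
  rw [uIcc_of_le (hp.1.trans hr.1), uIcc_of_le hq.1]
  exact Icc_subset_Icc_right hr.2

variable [NormedSpace ℝ E]

theorem continuousOn_primitive_setOf_intervalIntegrable :
    ContinuousOn (fun t => ∫ s in a..t, h s) {t | a ≤ t ∧ IntervalIntegrable h volume a t} := by
  rintro t ⟨hat, ht⟩
  by_cases hext : ∃ b, t < b ∧ IntervalIntegrable h volume a b
  · obtain ⟨b, htb, hb⟩ := hext
    have hcont := intervalIntegral.continuousOn_primitive_interval' hb left_mem_uIcc
    rw [uIcc_of_le (hat.trans htb.le)] at hcont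
    refine (hcont t ⟨hat, htb.le⟩).mono_of_mem_nhdsWithin ?_
    filter_upwards [self_mem_nhdsWithin, mem_nhdsWithin_of_mem_nhds (Iic_mem_nhds htb)]
      with r hr hrb using ⟨hr.1, hrb⟩
  · have hcont := intervalIntegral.continuousOn_primitive_interval' ht left_mem_uIcc
    rw [uIcc_of_le hat] at hcont
    exact (hcont t ⟨hat, le_rfl⟩).mono fun r hr =>
      ⟨hr.1, not_lt.1 fun htr => hext ⟨r, htr, hr.2⟩⟩

theorem aestronglyMeasurable_primitive_Ici :
    AEStronglyMeasurable (fun t => ∫ s in a..t, h s) (volume.restrict (Ici a)) := by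
  set I := {t | a ≤ t ∧ IntervalIntegrable h volume a t}
  have hI : MeasurableSet I := (ordConnected_setOf_intervalIntegrable h a).measurableSet
  have hind : AEStronglyMeasurable (I.indicator fun t => ∫ s in a..t, h s) volume :=
    (aestronglyMeasurable_indicator_iff hI).2
      ((continuousOn_primitive_setOf_intervalIntegrable h a).aestronglyMeasurable hI)
  refine hind.restrict.congr ?_
  filter_upwards [ae_restrict_mem measurableSet_Ici] with t hat
  by_cases ht : IntervalIntegrable h volume a t
  · exact indicator_of_mem (show t ∈ I from ⟨hat, ht⟩) _
  · rw [indicator_of_notMem (fun hmem => ht hmem.2), intervalIntegral.integral_undef ht]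

end Primitive

section RightDerivative

theorem continuousOn_Ici_of_forall_Icc {u : ℝ → ℝ} {a : ℝ}
    (h : ∀ b, a ≤ b → ContinuousOn u (Icc a b)) : ContinuousOn u (Ici a) := by
  intro t hat
  refine (h (t + 1) (le_add_of_le_of_nonneg hat zero_le_one) t
    ⟨hat, (lt_add_one t).le⟩).mono_of_mem_nhdsWithin ?_
  filter_upwards [self_mem_nhdsWithin, mem_nhdsWithin_of_mem_nhds (Iic_mem_nhds (lt_add_one t))]
    with r hr hrt using ⟨hr, hrt⟩

theorem hasDerivWithinAt_comp_const_add_Ici {u : ℝ → ℝ} {d s t : ℝ}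
    (h : HasDerivWithinAt u d (Ici (s + t)) (s + t)) :
    HasDerivWithinAt (fun r => u (s + r)) d (Ici t) t := by
  have hadd : HasDerivWithinAt (fun r => s + r) 1 (Ici t) t :=
    ((hasDerivAt_id t).const_add s).hasDerivWithinAt
  simpa [Function.comp_def] using h.comp t hadd fun r hr => by simpa using hr

theorem le_mul_exp_of_hasDerivWithinAt_le {u u' : ℝ → ℝ} {K T : ℝ}
    (hu : ContinuousOn u (Icc 0 T))
    (hu' : ∀ t ∈ Ico 0 T, HasDerivWithinAt u (u' t) (Ici t) t)
    (hle : ∀ t ∈ Ico 0 T, u' t ≤ K * u t) :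
    ∀ t ∈ Icc 0 T, u t ≤ u 0 * Real.exp (K * t) := by
  intro t ht
  have hgronwall := le_gronwallBound_of_liminf_deriv_right_le (δ := u 0) (ε := 0) hu
    (fun s hs r hr => by
      simpa [slope_def_field, div_eq_inv_mul] using (hu' s hs).liminf_right_slope_le hr)
    le_rfl (by simpa using hle) t ht
  simpa [gronwallBound_ε0] using hgronwall

variable {u ψ : ℝ → ℝ} {l T : ℝ}

theorem continuousOn_of_eq_sub_primitive (hT : 0 ≤ T)
    (hu : ∀ t ∈ Icc 0 T, u t = l - ∫ s in (0 : ℝ)..t, ψ s)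
    (hψ : IntervalIntegrable ψ volume 0 T) : ContinuousOn u (Icc 0 T) := by
  have hcont := intervalIntegral.continuousOn_primitive_interval' hψ left_mem_uIcc
  rw [uIcc_of_le hT] at hcont
  exact (continuousOn_const.sub hcont).congr hu

theorem hasDerivWithinAt_of_eq_sub_primitive
    (hu : ∀ t ∈ Icc 0 T, u t = l - ∫ s in (0 : ℝ)..t, ψ s) (hψ : ContinuousOn ψ (Icc 0 T))
    {t : ℝ} (ht : t ∈ Ico 0 T) : HasDerivWithinAt u (-ψ t) (Ici t) t := by
  have hIci : Icc 0 T ∈ nhdsWithin t (Ici t) :=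
    mem_of_superset (Icc_mem_nhdsGE ht.2) (Icc_subset_Icc_left ht.1)
  have hIoi : Icc 0 T ∈ nhdsWithin t (Ioi t) := nhdsWithin_mono t Ioi_subset_Ici_self hIci
  have hint : IntervalIntegrable ψ volume 0 t :=
    (hψ.mono (Icc_subset_Icc_right ht.2.le)).intervalIntegrable_of_Icc ht.1
  have hprimitive : HasDerivWithinAt (fun y => ∫ s in (0 : ℝ)..y, ψ s) (ψ t) (Ici t) t :=
    intervalIntegral.integral_hasDerivWithinAt_right (t := Ioi t) hint
      ⟨Icc 0 T, hIoi, hψ.aestronglyMeasurable measurableSet_Icc⟩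
      ((hψ t ⟨ht.1, ht.2.le⟩).mono_of_mem_nhdsWithin hIoi)
  refine (hprimitive.const_sub l).congr_of_eventuallyEq ?_ (hu t ⟨ht.1, ht.2.le⟩)
  filter_upwards [hIci] with y hy using hu y hy

end RightDerivative

section Cumulant

/-- The regularity of a branching mechanism `φ` that the equation `v' = -φ(v)` needs on `[0, ∞)`:
local Lipschitz continuity for uniqueness, and a linear lower bound against explosion. -/
structure IsRegularMechanism (φ : ℝ → ℝ) : Prop where
  lipschitzOnWith_Icc : ∀ R, ∃ K, LipschitzOnWith K φ (Icc 0 R)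
  neg_mul_le : ∃ C, 0 ≤ C ∧ ∀ l, 0 ≤ l → -(C * l) ≤ φ l

theorem IsRegularMechanism.continuousOn {φ : ℝ → ℝ} (hφ : IsRegularMechanism φ) :
    ContinuousOn φ (Ici 0) := by
  refine continuousOn_Ici_of_forall_Icc fun R _ => ?_
  obtain ⟨K, hK⟩ := hφ.lipschitzOnWith_Icc R
  exact hK.continuousOn

namespace IsCumulant

variable {φ : ℝ → ℝ} {v : ℝ → ℝ → ℝ} {l s t T : ℝ}

theorem apply_zero (hv : IsCumulant φ v) (hl : 0 ≤ l) : v 0 l = l := by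
  simpa using (hv l hl 0 le_rfl).2

theorem le_mul_exp (hv : IsCumulant φ v) (hφ : ContinuousOn φ (Ici 0)) {C : ℝ} (hC : 0 ≤ C)
    (hlower : ∀ r, 0 ≤ r → -(C * r) ≤ φ r) (hl : 0 ≤ l) (ht : 0 ≤ t) :
    v t l ≤ l * Real.exp (C * t) := by
  by_cases hint : IntervalIntegrable (fun s => φ (v s l)) volume 0 t
  · have heq : ∀ s ∈ Icc 0 t, v s l = l - ∫ r in (0 : ℝ)..s, φ (v r l) :=
      fun s hs => (hv l hl s hs.1).2
    have hcont := continuousOn_of_eq_sub_primitive ht heq hint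
    have hφv : ContinuousOn (fun s => φ (v s l)) (Icc 0 t) :=
      hφ.comp hcont fun s hs => (hv l hl s hs.1).1
    have := le_mul_exp_of_hasDerivWithinAt_le (K := C) hcont
      (fun s hs => hasDerivWithinAt_of_eq_sub_primitive heq hφv hs)
      (fun s hs => by linarith [hlower _ (hv l hl s hs.1).1]) t ⟨ht, le_rfl⟩
    rwa [hv.apply_zero hl] at this
  · -- Here the integral takes its junk value `0`, so that the equation reads `v t l = l`.
    rw [(hv l hl t ht).2, intervalIntegral.integral_undef hint, sub_zero]
    exact le_mul_of_one_le_right hl (Real.one_le_exp (by positivity))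

theorem intervalIntegrable (hv : IsCumulant φ v) (hφ : IsRegularMechanism φ) (hl : 0 ≤ l)
    (hT : 0 ≤ T) : IntervalIntegrable (fun s => φ (v s l)) volume 0 T := by
  rw [intervalIntegrable_iff_integrableOn_Ioc_of_le hT]
  obtain ⟨C, hC, hlower⟩ := hφ.neg_mul_le
  obtain ⟨M, hM⟩ : ∃ M, ∀ r ∈ Icc 0 (l * Real.exp (C * T)), ‖φ r‖ ≤ M :=
    isCompact_Icc.exists_bound_of_continuousOn (hφ.continuousOn.mono Icc_subset_Ici_self)
  have hnonneg : ∀ s ∈ Ioc 0 T, 0 ≤ v s l := fun s hs => (hv l hl s hs.1.le).1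
  have hv_meas : AEStronglyMeasurable (fun s => v s l) (volume.restrict (Ioc 0 T)) := by
    refine ((aestronglyMeasurable_const (b := l)).sub
      ((aestronglyMeasurable_primitive_Ici (fun s => φ (v s l)) 0).mono_set
        (Ioc_subset_Icc_self.trans Icc_subset_Ici_self))).congr ?_
    filter_upwards [ae_restrict_mem measurableSet_Ioc] with s hs
    exact (hv l hl s hs.1.le).2.symm
  have hφ_max : Continuous fun r => φ (max 0 r) :=
    hφ.continuousOn.comp_continuous (by fun_prop) fun r => le_max_left 0 r
  refine ⟨(hφ_max.comp_aestronglyMeasurable hv_meas).congr ?_,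
    HasFiniteIntegral.restrict_of_bounded (C := M) measure_Ioc_lt_top ?_⟩
  · filter_upwards [ae_restrict_mem measurableSet_Ioc] with s hs
    simp only [max_eq_right (hnonneg s hs)]
  · filter_upwards [ae_restrict_mem measurableSet_Ioc] with s hs
    refine hM _ ⟨hnonneg s hs, (hv.le_mul_exp hφ.continuousOn hC hlower hl hs.1.le).trans ?_⟩
    gcongr
    exact hs.2

theorem continuousOn (hv : IsCumulant φ v) (hφ : IsRegularMechanism φ) (hl : 0 ≤ l) :
    ContinuousOn (fun s => v s l) (Ici 0) :=
  continuousOn_Ici_of_forall_Icc fun _ hT =>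
    continuousOn_of_eq_sub_primitive hT (fun s hs => (hv l hl s hs.1).2)
      (hv.intervalIntegrable hφ hl hT)

theorem hasDerivWithinAt (hv : IsCumulant φ v) (hφ : IsRegularMechanism φ) (hl : 0 ≤ l)
    (ht : 0 ≤ t) : HasDerivWithinAt (fun s => v s l) (-φ (v t l)) (Ici t) t := by
  refine hasDerivWithinAt_of_eq_sub_primitive (ψ := fun s => φ (v s l)) (T := t + 1)
    (fun s hs => (hv l hl s hs.1).2) ?_ ⟨ht, lt_add_one t⟩
  exact hφ.continuousOn.comp ((hv.continuousOn hφ hl).mono Icc_subset_Ici_self)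
    fun s hs => (hv l hl s hs.1).1

theorem add_apply (hv : IsCumulant φ v) (hφ : IsRegularMechanism φ) (hl : 0 ≤ l) (hs : 0 ≤ s)
    (ht : 0 ≤ t) : v (s + t) l = v t (v s l) := by
  have hvs := (hv l hl s hs).1
  have hshift : ContinuousOn (fun r => v (s + r) l) (Icc 0 t) :=
    (hv.continuousOn hφ hl).comp (f := fun r => s + r) (by fun_prop)
      fun r hr => add_nonneg hs hr.1
  have hcont : ContinuousOn (fun r => v r (v s l)) (Icc 0 t) :=
    (hv.continuousOn hφ hvs).mono Icc_subset_Ici_self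
  obtain ⟨B₁, hB₁⟩ := isCompact_Icc.bddAbove_image hshift
  obtain ⟨B₂, hB₂⟩ := isCompact_Icc.bddAbove_image hcont
  obtain ⟨K, hK⟩ := hφ.lipschitzOnWith_Icc (max B₁ B₂)
  refine ODE_solution_unique_of_mem_Icc_right (v := fun _ y => -φ y)
    (s := fun _ => Icc 0 (max B₁ B₂)) (f := fun r => v (s + r) l) (g := fun r => v r (v s l))
    (K := K) (fun _ _ => LipschitzOnWith.of_dist_le_mul fun a ha b hb => ?_)
    hshift (fun r hr => ?_) (fun r hr => ?_) hcont (fun r hr => ?_) (fun r hr => ?_) ?_ ⟨ht, le_rfl⟩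
  · rw [dist_neg_neg]
    exact hK.dist_le_mul a ha b hb
  · exact hasDerivWithinAt_comp_const_add_Ici (u := fun s => v s l)
      (hv.hasDerivWithinAt hφ hl (add_nonneg hs hr.1))
  · exact ⟨(hv l hl _ (add_nonneg hs hr.1)).1,
      le_max_of_le_left (hB₁ ⟨r, ⟨hr.1, hr.2.le⟩, rfl⟩)⟩
  · exact hv.hasDerivWithinAt hφ hvs hr.1
  · exact ⟨(hv _ hvs r hr.1).1, le_max_of_le_right (hB₂ ⟨r, ⟨hr.1, hr.2.le⟩, rfl⟩)⟩
  · simpa using (hv.apply_zero hvs).symm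

end IsCumulant

end Cumulant

section Laplace

variable {μ : Measure ℝ} [IsFiniteMeasure μ] {l : ℝ}

theorem integrable_exp_neg_mul_of_ae_nonneg (hμ : ∀ᵐ y ∂μ, 0 ≤ y) (hl : 0 ≤ l) :
    Integrable (fun y => Real.exp (-(l * y))) μ := by
  refine (integrable_const (1 : ℝ)).mono' (by fun_prop) ?_
  filter_upwards [hμ] with y hy
  rw [Real.norm_eq_abs, Real.abs_exp, Real.exp_le_one_iff]
  exact neg_nonpos.2 (mul_nonneg hl hy)

theorem mem_interior_integrableExpSet_neg (hμ : ∀ᵐ y ∂μ, 0 ≤ y) (hl : 0 < l) :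
    l ∈ interior (ProbabilityTheory.integrableExpSet (fun y => -y) μ) := by
  rw [mem_interior_iff_mem_nhds]
  filter_upwards [Ioi_mem_nhds hl] with r hr
  simpa [ProbabilityTheory.integrableExpSet] using
    integrable_exp_neg_mul_of_ae_nonneg hμ (mem_Ioi.1 hr).le

theorem integrable_mul_exp_neg_mul_of_ae_nonneg (hμ : ∀ᵐ y ∂μ, 0 ≤ y) (hl : 0 < l) :
    Integrable (fun y => y * Real.exp (-(l * y))) μ := by
  simpa using ProbabilityTheory.integrable_pow_mul_exp_of_mem_interior_integrableExpSet
    (mem_interior_integrableExpSet_neg hμ hl) 1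

theorem hasDerivAt_integral_exp_neg_mul (hμ : ∀ᵐ y ∂μ, 0 ≤ y) (hl : 0 < l) :
    HasDerivAt (fun r => ∫ y, Real.exp (-(r * y)) ∂μ) (-∫ y, y * Real.exp (-(l * y)) ∂μ) l := by
  have hmgf := ProbabilityTheory.hasDerivAt_mgf (mem_interior_integrableExpSet_neg hμ hl)
  unfold ProbabilityTheory.mgf at hmgf
  simpa [integral_neg] using hmgf

end Laplace

section ForwardEquation

variable {φ : ℝ → ℝ} {v : ℝ → ℝ → ℝ} {Q : ℝ → ℝ → Measure ℝ} {l t x : ℝ}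

theorem IsCBSemigroup.ae_nonneg (hQ : IsCBSemigroup v Q) (ht : 0 ≤ t) (hx : 0 ≤ x) :
    ∀ᵐ y ∂(Q t x), 0 ≤ y := by
  rw [ae_iff]
  simpa [Iio] using (hQ t x ht hx).2.1

theorem IsCBSemigroup.hasDerivWithinAt_integral_exp (hQ : IsCBSemigroup v Q)
    (hφ : IsRegularMechanism φ) (hv : IsCumulant φ v) (hx : 0 ≤ x) (hl : 0 < l) (ht : 0 ≤ t) :
    HasDerivWithinAt (fun s => ∫ y, Real.exp (-(l * y)) ∂(Q s x))
      (φ l * ∫ y, y * Real.exp (-(l * y)) ∂(Q t x)) (Ici t) t := by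
  obtain ⟨_, _, hLaplace⟩ := hQ t x ht hx
  -- By the flow property, the Laplace transform at time `t + s` is that at time `t`
  -- evaluated at `v s l`.
  have hflow : ∀ s ∈ Ici (0 : ℝ), ∫ y, Real.exp (-(l * y)) ∂(Q (t + s) x) =
      ∫ y, Real.exp (-(v s l * y)) ∂(Q t x) := fun s hs => by
    rw [(hQ (t + s) x (add_nonneg ht hs) hx).2.2 l hl.le, hLaplace _ (hv l hl.le s hs).1,
      add_comm, hv.add_apply hφ hl.le hs ht]
  have hv' := hv.hasDerivWithinAt hφ hl.le le_rfl
  rw [hv.apply_zero hl.le] at hv'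
  have hcomp : HasDerivWithinAt (fun s => ∫ y, Real.exp (-(v s l * y)) ∂(Q t x))
      ((-∫ y, y * Real.exp (-(l * y)) ∂(Q t x)) * -φ l) (Ici 0) 0 :=
    (hasDerivAt_integral_exp_neg_mul (hQ.ae_nonneg ht hx) hl).comp_hasDerivWithinAt_of_eq 0 hv'
      (hv.apply_zero hl.le).symm
  have hzero := (hcomp.congr hflow (hflow 0 self_mem_Ici)).congr_deriv
    (show _ = φ l * ∫ y, y * Real.exp (-(l * y)) ∂(Q t x) by ring)
  have hshift := hasDerivWithinAt_comp_const_add_Ici (s := -t) (t := t)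
    (u := fun s => ∫ y, Real.exp (-(l * y)) ∂(Q (t + s) x)) (by simpa using hzero)
  simpa using hshift

end ForwardEquation

section Convexity

theorem exists_lipschitzOnWith_Icc_of_convexOn_Ici {φ : ℝ → ℝ} {a C : ℝ}
    (hφ : ConvexOn ℝ (Ici a) φ) (hlower : ∀ x, a ≤ x → φ a - C * (x - a) ≤ φ x) (R : ℝ) :
    ∃ K, LipschitzOnWith K φ (Icc a R) := by
  rcases lt_or_ge R a with hR | hR
  · exact ⟨0, by simp [Icc_eq_empty_of_lt hR]⟩
  have hR1 : a ≤ R + 1 := by linarith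
  -- The slopes of `φ` on `[a, R]` lie between `-C` and the slope over `[R, R + 1]`.
  have slope_lower : ∀ x y, a ≤ x → x < y → -C * (y - x) ≤ φ y - φ x := by
    intro x y hx hxy
    have hay : a < y := hx.trans_lt hxy
    have hsecant := hφ.secant_mono hay.le self_mem_Ici hx hay.ne hxy.ne hx
    rw [← neg_div_neg_eq, ← neg_div_neg_eq (φ x - φ y), neg_sub, neg_sub, neg_sub,
      neg_sub] at hsecant
    have hlow : -C ≤ (φ y - φ a) / (y - a) :=
      (le_div_iff₀ (sub_pos.2 hay)).2 (by linarith [hlower y hay.le])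
    exact (le_div_iff₀ (sub_pos.2 hxy)).1 (hlow.trans hsecant)
  have slope_upper : ∀ x y, a ≤ x → x < y → y ≤ R → φ y - φ x ≤ (φ (R + 1) - φ R) * (y - x) := by
    intro x y hx hxy hy
    have hy1 : y < R + 1 := by linarith
    have hsecant := hφ.secant_mono hx (hx.trans hxy.le) hR1 hxy.ne' (hxy.trans hy1).ne' hy1.le
    have hsecant' := hφ.secant_mono hR1 hx hR (hxy.trans hy1).ne (lt_add_one R).ne (hxy.le.trans hy)
    rw [← neg_div_neg_eq, ← neg_div_neg_eq (φ R - _), neg_sub, neg_sub, neg_sub, neg_sub,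
      add_sub_cancel_left, div_one] at hsecant'
    exact (div_le_iff₀ (sub_pos.2 hxy)).1 (hsecant.trans hsecant')
  refine ⟨Real.toNNReal (max C (φ (R + 1) - φ R)), LipschitzOnWith.of_le_add_mul _ ?_⟩
  intro x hx y hy
  rw [Real.dist_eq, ← sub_le_iff_le_add']
  rcases lt_trichotomy x y with hxy | rfl | hxy
  · rw [abs_of_neg (sub_neg.2 hxy)]
    have := mul_le_mul_of_nonneg_right
      ((le_max_left C (φ (R + 1) - φ R)).trans (Real.le_coe_toNNReal _)) (sub_pos.2 hxy).le
    linarith [slope_lower x y hx.1 hxy]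
  · simp
  · rw [abs_of_pos (sub_pos.2 hxy)]
    exact (slope_upper y x hy.1 hxy hx.2).trans (mul_le_mul_of_nonneg_right
      ((le_max_right C _).trans (Real.le_coe_toNNReal _)) (sub_pos.2 hxy).le)

theorem convexOn_integral {α : Type*} [MeasurableSpace α] {μ : Measure α} {s : Set ℝ}
    {F : ℝ → α → ℝ} (hs : Convex ℝ s) (hF : ∀ᵐ z ∂μ, ConvexOn ℝ s fun l => F l z)
    (hint : ∀ l ∈ s, Integrable (F l) μ) : ConvexOn ℝ s fun l => ∫ z, F l z ∂μ := by
  refine ⟨hs, fun p hp q hq a b ha hb hab => ?_⟩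
  simp only [smul_eq_mul]
  rw [← integral_const_mul, ← integral_const_mul,
    ← integral_add ((hint p hp).const_mul a) ((hint q hq).const_mul b)]
  refine integral_mono_ae (hint _ (hs hp hq ha hb hab))
    (((hint p hp).const_mul a).add ((hint q hq).const_mul b)) ?_
  filter_upwards [hF] with z hz using hz.2 hp hq ha hb hab

end Convexity

section Generator

/-- A Lévy measure on `(0, ∞)` under which the large jumps have finite mean, that is
`∫ z ∧ z² m(dz) < ∞`; equivalently, the branching mechanism has a finite derivative at `0`. -/
structure IsFiniteMeanLevyMeasure (m : Measure ℝ) : Prop where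
  ae_pos : ∀ᵐ z ∂m, 0 < z
  integrable_min : Integrable (fun z => min z (z ^ 2)) m

/-- The increment of `g` along a jump of size `z` from `y`, compensated for the small jumps by
the same truncation `z ≤ 1` as in `IsBranchingMechanism`. -/
def compensatedJump (g : ℝ → ℝ) (y z : ℝ) : ℝ :=
  g (y + z) - g y - if z ≤ 1 then z * deriv g y else 0

/-- The generator
`L g(y) = y (-β g'(y) + σ²/2 g''(y) + ∫ (g(y+z) - g(y) - z g'(y) 1_{z ≤ 1}) m(dz))`
of the CB-process with parameters `β`, `σ` and Lévy measure `m`. -/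
def cbGenerator (β σ : ℝ) (m : Measure ℝ) (g : ℝ → ℝ) (y : ℝ) : ℝ :=
  y * (-(β * deriv g y) + σ ^ 2 / 2 * deriv (deriv g) y + ∫ z, compensatedJump g y z ∂m)

/-- The class of functions to which `cbGenerator` is applied: `C²` functions whose first two
derivatives are bounded on `[0, ∞)`, so that the compensated jumps are integrable. -/
structure IsTestFunction (g : ℝ → ℝ) : Prop where
  contDiff : ContDiff ℝ 2 g
  bounded : ∃ S, ∀ y, 0 ≤ y → |deriv g y| ≤ S ∧ |deriv (deriv g) y| ≤ S

variable {g h : ℝ → ℝ} {m : Measure ℝ} {S c y z : ℝ}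

theorem measurable_compensatedJump (hg : Measurable g) (y : ℝ) :
    Measurable (compensatedJump g y) :=
  ((hg.comp (measurable_const_add y)).sub_const _).sub
    (Measurable.ite measurableSet_Iic (by fun_prop) measurable_const)

theorem abs_compensatedJump_le_mul_sq (hg : ContDiff ℝ 2 g) (hz : 0 ≤ z) (hz1 : z ≤ 1)
    (hS : ∀ w ∈ Icc y (y + z), |deriv (deriv g) w| ≤ S) :
    |compensatedJump g y z| ≤ S * z ^ 2 := by
  have hleft : y ∈ Icc y (y + z) := left_mem_Icc.2 (by linarith)
  have hright : y + z ∈ Icc y (y + z) := right_mem_Icc.2 (by linarith)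
  have hderiv_sub : ∀ w ∈ Icc y (y + z), ‖deriv g w - deriv g y‖ ≤ S * z := by
    intro w hw
    refine ((convex_Icc y (y + z)).norm_image_sub_le_of_norm_deriv_le
      (fun w _ => hg.differentiable_deriv_two w) hS hleft hw).trans ?_
    have : |w - y| ≤ z := abs_le.2 ⟨by linarith [hw.1], by linarith [hw.2]⟩
    exact mul_le_mul_of_nonneg_left this ((abs_nonneg _).trans (hS y hleft))
  have hcorrected : ∀ w ∈ Icc y (y + z), HasDerivWithinAt (fun w => g w - w * deriv g y)
      (deriv g w - deriv g y) (Icc y (y + z)) w := fun w _ =>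
    ((hg.differentiable (by norm_num) w).hasDerivAt.fun_sub
      (by simpa using (hasDerivAt_id' w).mul_const (deriv g y))).hasDerivWithinAt
  have hmvt := (convex_Icc y (y + z)).norm_image_sub_le_of_norm_hasDerivWithin_le
    hcorrected hderiv_sub hleft hright
  rw [Real.norm_eq_abs, Real.norm_eq_abs, add_sub_cancel_left, abs_of_nonneg hz] at hmvt
  calc |compensatedJump g y z|
      = |g (y + z) - (y + z) * deriv g y - (g y - y * deriv g y)| := by
        rw [compensatedJump, if_pos hz1]
        ring_nf
    _ ≤ S * z ^ 2 := hmvt.trans_eq (by ring)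

theorem abs_compensatedJump_le_mul (hg : Differentiable ℝ g) (hz1 : 1 < z)
    (hS : ∀ w ∈ Icc y (y + z), |deriv g w| ≤ S) : |compensatedJump g y z| ≤ S * z := by
  have hmvt := (convex_Icc y (y + z)).norm_image_sub_le_of_norm_deriv_le (fun w _ => hg w) hS
    (left_mem_Icc.2 (by linarith)) (right_mem_Icc.2 (by linarith))
  rwa [Real.norm_eq_abs, Real.norm_eq_abs, add_sub_cancel_left,
    abs_of_pos (zero_lt_one.trans hz1), ← sub_zero (g (y + z) - g y),
    ← if_neg (c := z ≤ 1) (t := z * deriv g y) (e := (0 : ℝ)) hz1.not_ge] at hmvt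

theorem abs_compensatedJump_le_mul_min (hg : ContDiff ℝ 2 g) (hz : 0 < z)
    (hS : ∀ w, y ≤ w → |deriv g w| ≤ S ∧ |deriv (deriv g) w| ≤ S) :
    |compensatedJump g y z| ≤ S * min z (z ^ 2) := by
  rcases le_or_gt z 1 with hz1 | hz1
  · rw [min_eq_right (by nlinarith)]
    exact abs_compensatedJump_le_mul_sq hg hz.le hz1 fun w hw => (hS w hw.1).2
  · rw [min_eq_left (by nlinarith)]
    exact abs_compensatedJump_le_mul (hg.differentiable (by norm_num)) hz1
      fun w hw => (hS w hw.1).1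

theorem IsTestFunction.integrable_compensatedJump (hg : IsTestFunction g)
    (hm : IsFiniteMeanLevyMeasure m) (hy : 0 ≤ y) : Integrable (compensatedJump g y) m := by
  obtain ⟨S, hS⟩ := hg.bounded
  refine (hm.integrable_min.const_mul S).mono'
    (measurable_compensatedJump hg.contDiff.continuous.measurable y).aestronglyMeasurable ?_
  filter_upwards [hm.ae_pos] with z hz
  exact abs_compensatedJump_le_mul_min hg.contDiff hz fun w hw => hS w (hy.trans hw)

theorem deriv_add_of_contDiff (hg : ContDiff ℝ 2 g) (hh : ContDiff ℝ 2 h) :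
    deriv (g + h) = deriv g + deriv h :=
  funext fun y => deriv_add (hg.differentiable (by norm_num) y) (hh.differentiable (by norm_num) y)

theorem deriv_deriv_add_of_contDiff (hg : ContDiff ℝ 2 g) (hh : ContDiff ℝ 2 h) :
    deriv (deriv (g + h)) = deriv (deriv g) + deriv (deriv h) := by
  rw [deriv_add_of_contDiff hg hh]
  exact funext fun y => deriv_add (hg.differentiable_deriv_two y) (hh.differentiable_deriv_two y)

theorem IsTestFunction.add (hg : IsTestFunction g) (hh : IsTestFunction h) :
    IsTestFunction (g + h) := by
  obtain ⟨S, hS⟩ := hg.bounded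
  obtain ⟨S', hS'⟩ := hh.bounded
  refine ⟨hg.contDiff.add hh.contDiff, S + S', fun y hy => ?_⟩
  rw [deriv_deriv_add_of_contDiff hg.contDiff hh.contDiff,
    deriv_add_of_contDiff hg.contDiff hh.contDiff]
  exact ⟨(abs_add_le _ _).trans (add_le_add (hS y hy).1 (hS' y hy).1),
    (abs_add_le _ _).trans (add_le_add (hS y hy).2 (hS' y hy).2)⟩

theorem deriv_const_smul_eq (c : ℝ) (g : ℝ → ℝ) : deriv (c • g) = c • deriv g :=
  funext fun _ => deriv_const_smul_field c g

theorem IsTestFunction.const_smul (hg : IsTestFunction g) (c : ℝ) : IsTestFunction (c • g) := by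
  obtain ⟨S, hS⟩ := hg.bounded
  refine ⟨hg.contDiff.const_smul c, |c| * S, fun y hy => ?_⟩
  rw [deriv_const_smul_eq, deriv_const_smul_eq]
  simp only [Pi.smul_apply, smul_eq_mul, abs_mul]
  exact ⟨mul_le_mul_of_nonneg_left (hS y hy).1 (abs_nonneg c),
    mul_le_mul_of_nonneg_left (hS y hy).2 (abs_nonneg c)⟩

theorem cbGenerator_add (hm : IsFiniteMeanLevyMeasure m) (hg : IsTestFunction g)
    (hh : IsTestFunction h) (hy : 0 ≤ y) (β σ : ℝ) :
    cbGenerator β σ m (g + h) y = cbGenerator β σ m g y + cbGenerator β σ m h y := by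
  have hjump : ∀ z, compensatedJump (g + h) y z =
      compensatedJump g y z + compensatedJump h y z := fun z => by
    simp only [compensatedJump, deriv_add_of_contDiff hg.contDiff hh.contDiff, Pi.add_apply]
    split_ifs <;> ring
  simp only [cbGenerator, hjump]
  rw [deriv_deriv_add_of_contDiff hg.contDiff hh.contDiff,
    deriv_add_of_contDiff hg.contDiff hh.contDiff, Pi.add_apply, Pi.add_apply,
    integral_add (hg.integrable_compensatedJump hm hy) (hh.integrable_compensatedJump hm hy)]
  ring

theorem cbGenerator_const_smul (β σ c : ℝ) (m : Measure ℝ) (g : ℝ → ℝ) (y : ℝ) :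
    cbGenerator β σ m (c • g) y = c * cbGenerator β σ m g y := by
  have hjump : ∀ z, compensatedJump (c • g) y z = c * compensatedJump g y z := fun z => by
    simp only [compensatedJump, deriv_const_smul_eq, Pi.smul_apply, smul_eq_mul]
    split_ifs <;> ring
  simp only [cbGenerator, hjump, deriv_const_smul_eq, Pi.smul_apply,
    smul_eq_mul, integral_const_mul]
  ring

theorem exists_abs_cbGenerator_le (hm : IsFiniteMeanLevyMeasure m) (β σ : ℝ) :
    ∃ M, 0 ≤ M ∧ ∀ g, ContDiff ℝ 2 g → ∀ y S, 0 ≤ y →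
      (∀ w, y ≤ w → |deriv g w| ≤ S ∧ |deriv (deriv g) w| ≤ S) →
      |cbGenerator β σ m g y| ≤ M * S * y := by
  have hmin_nonneg : 0 ≤ ∫ z, min z (z ^ 2) ∂m :=
    integral_nonneg_of_ae (hm.ae_pos.mono fun z hz => le_min hz.le (sq_nonneg z))
  refine ⟨|β| + σ ^ 2 / 2 + ∫ z, min z (z ^ 2) ∂m, by positivity, fun g hg y S hy hS => ?_⟩
  obtain ⟨hS1, hS2⟩ := hS y le_rfl
  have hjump : |∫ z, compensatedJump g y z ∂m| ≤ S * ∫ z, min z (z ^ 2) ∂m := by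
    rw [← integral_const_mul, ← Real.norm_eq_abs]
    refine norm_integral_le_of_norm_le (hm.integrable_min.const_mul S) ?_
    filter_upwards [hm.ae_pos] with z hz using abs_compensatedJump_le_mul_min hg hz hS
  have hdrift : |-(β * deriv g y)| ≤ |β| * S := by
    rw [abs_neg, abs_mul]
    gcongr
  have hdiffusion : |σ ^ 2 / 2 * deriv (deriv g) y| ≤ σ ^ 2 / 2 * S := by
    rw [abs_mul, abs_of_nonneg (by positivity : 0 ≤ σ ^ 2 / 2)]
    gcongr
  rw [cbGenerator, abs_mul, abs_of_nonneg hy, mul_comm]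
  refine mul_le_mul_of_nonneg_right ((abs_add_three _ _ _).trans ?_) hy
  linarith

end Generator

section Exponentials

/-- The integrand `e^{-zl} - 1 + z l 1_{z ≤ 1}` in the Lévy–Khintchine formula for a branching
mechanism. -/
def levyKernel (l z : ℝ) : ℝ :=
  Real.exp (-(z * l)) - 1 + if z ≤ 1 then z * l else 0

variable {m : Measure ℝ} {l y z : ℝ}

theorem deriv_exp_neg_mul (l : ℝ) : deriv (fun y => Real.exp (-(l * y))) =
    (-l) • fun y => Real.exp (-(l * y)) := by
  ext y
  have hlin : HasDerivAt (fun y => -(l * y)) (-l) y := by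
    simpa using ((hasDerivAt_id' y).const_mul l).fun_neg
  rw [hlin.exp.deriv, Pi.smul_apply, smul_eq_mul, mul_comm]

theorem isTestFunction_exp_neg_mul (hl : 0 ≤ l) :
    IsTestFunction fun y => Real.exp (-(l * y)) := by
  refine ⟨by fun_prop, max l (l * l), fun y hy => ?_⟩
  have hexp : |Real.exp (-(l * y))| ≤ 1 := by
    rw [Real.abs_exp, Real.exp_le_one_iff]
    exact neg_nonpos.2 (mul_nonneg hl hy)
  simp only [deriv_exp_neg_mul, deriv_const_smul_eq, Pi.smul_apply, smul_eq_mul, abs_mul, abs_neg,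
    abs_of_nonneg hl, ← mul_assoc]
  exact ⟨(mul_le_of_le_one_right hl hexp).trans (le_max_left _ _),
    (mul_le_of_le_one_right (mul_nonneg hl hl) hexp).trans (le_max_right _ _)⟩

theorem isTestFunction_one : IsTestFunction 1 := by
  simpa [Pi.one_def] using isTestFunction_exp_neg_mul le_rfl

theorem cbGenerator_one (β σ : ℝ) (m : Measure ℝ) (y : ℝ) : cbGenerator β σ m 1 y = 0 := by
  simp [cbGenerator, compensatedJump, Pi.one_def]

theorem compensatedJump_exp_neg_mul (l y z : ℝ) :
    compensatedJump (fun y => Real.exp (-(l * y))) y z = Real.exp (-(l * y)) * levyKernel l z := by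
  have hexp : Real.exp (-(l * (y + z))) = Real.exp (-(l * y)) * Real.exp (-(z * l)) := by
    rw [← Real.exp_add]
    ring_nf
  simp only [compensatedJump, levyKernel, deriv_exp_neg_mul, Pi.smul_apply, smul_eq_mul, hexp]
  split_ifs <;> ring

theorem integrable_levyKernel (hm : IsFiniteMeanLevyMeasure m) (hl : 0 ≤ l) :
    Integrable (levyKernel l) m :=
  ((isTestFunction_exp_neg_mul hl).integrable_compensatedJump hm le_rfl).congr
    (.of_forall fun z => by simp [compensatedJump_exp_neg_mul])

theorem convexOn_levyKernel (z : ℝ) : ConvexOn ℝ univ fun l => levyKernel l z := by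
  have hexp : ConvexOn ℝ univ fun l => Real.exp (-(z * l)) := by
    simpa [Function.comp_def] using convexOn_exp.comp_linearMap (-LinearMap.mulLeft ℝ z)
  refine (hexp.add_const (-1)).add ?_
  split_ifs
  · exact (LinearMap.mulLeft ℝ z).convexOn convex_univ
  · exact convexOn_const 0 convex_univ

theorem neg_mul_min_le_levyKernel (hl : 0 ≤ l) (hz : 0 < z) :
    -(l * min z (z ^ 2)) ≤ levyKernel l z := by
  have hexp := Real.add_one_le_exp (-(z * l))
  rw [levyKernel]
  split_ifs with hz1
  · linarith [mul_nonneg hl (le_min hz.le (sq_nonneg z))]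
  · rw [min_eq_left (by nlinarith)]
    linarith

namespace IsBranchingMechanism

variable {φ : ℝ → ℝ} {β σ : ℝ}

theorem apply_zero (hφ : IsBranchingMechanism φ β σ m) : φ 0 = 0 := by
  simpa using hφ.form 0 le_rfl

theorem convexOn (hφ : IsBranchingMechanism φ β σ m) (hm : IsFiniteMeanLevyMeasure m) :
    ConvexOn ℝ (Ici 0) φ := by
  have hdrift : ConvexOn ℝ (Ici 0) fun l => β * l :=
    (LinearMap.mulLeft ℝ β).convexOn (convex_Ici 0)
  have hdiffusion : ConvexOn ℝ (Ici 0) fun l => σ ^ 2 * l ^ 2 / 2 :=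
    ((convexOn_pow 2).smul (by positivity : 0 ≤ σ ^ 2 / 2)).congr fun l _ => by
      simp only [smul_eq_mul]
      ring
  have hjump : ConvexOn ℝ (Ici 0) fun l => ∫ z, levyKernel l z ∂m :=
    convexOn_integral (convex_Ici 0)
      (.of_forall fun z => (convexOn_levyKernel z).subset (subset_univ _) (convex_Ici 0))
      fun l hl => integrable_levyKernel hm hl
  exact ((hdrift.add hdiffusion).add hjump).congr fun l hl => (hφ.form l hl).symm

theorem neg_mul_le (hφ : IsBranchingMechanism φ β σ m) (hm : IsFiniteMeanLevyMeasure m)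
    (hl : 0 ≤ l) : -((|β| + ∫ z, min z (z ^ 2) ∂m) * l) ≤ φ l := by
  have hjump : ∫ z, -(l * min z (z ^ 2)) ∂m ≤ ∫ z, levyKernel l z ∂m :=
    integral_mono_ae (hm.integrable_min.const_mul l).neg (integrable_levyKernel hm hl)
      (hm.ae_pos.mono fun z hz => neg_mul_min_le_levyKernel hl hz)
  rw [integral_neg, integral_const_mul] at hjump
  have hform : φ l = β * l + σ ^ 2 * l ^ 2 / 2 + ∫ z, levyKernel l z ∂m := hφ.form l hl
  have hdrift : -(|β| * l) ≤ β * l := by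
    rw [← neg_mul]
    exact mul_le_mul_of_nonneg_right (neg_abs_le β) hl
  linarith [show 0 ≤ σ ^ 2 * l ^ 2 / 2 by positivity]

theorem isRegularMechanism (hφ : IsBranchingMechanism φ β σ m)
    (hm : IsFiniteMeanLevyMeasure m) : IsRegularMechanism φ := by
  have hmin_nonneg : 0 ≤ ∫ z, min z (z ^ 2) ∂m :=
    integral_nonneg_of_ae (hm.ae_pos.mono fun z hz => le_min hz.le (sq_nonneg z))
  refine ⟨exists_lipschitzOnWith_Icc_of_convexOn_Ici (C := |β| + ∫ z, min z (z ^ 2) ∂m)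
    (hφ.convexOn hm) fun l hl => ?_, _, by positivity, fun l => hφ.neg_mul_le hm⟩
  simpa only [hφ.apply_zero, zero_sub, sub_zero] using hφ.neg_mul_le hm hl

theorem cbGenerator_exp_neg_mul (hφ : IsBranchingMechanism φ β σ m) (hl : 0 ≤ l) (y : ℝ) :
    cbGenerator β σ m (fun y => Real.exp (-(l * y))) y = φ l * (y * Real.exp (-(l * y))) := by
  have hform : φ l = β * l + σ ^ 2 * l ^ 2 / 2 + ∫ z, levyKernel l z ∂m := hφ.form l hl
  simp only [cbGenerator, compensatedJump_exp_neg_mul, integral_const_mul, deriv_const_smul_eq,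
    deriv_exp_neg_mul, Pi.smul_apply, smul_eq_mul, hform]
  ring

end IsBranchingMechanism

end Exponentials

section ExponentialSpan

variable {m : Measure ℝ} {μ : ℝ → Measure ℝ} {g h p : ℝ → ℝ} {β σ c l t x : ℝ}

/-- The exponential polynomials `∑ᵢ cᵢ e^{-lᵢ y}` with exponents `lᵢ ∈ s`. For `s = [0, ∞)` they are
the functions whose integrals are controlled by the Laplace transform; for `s = (0, ∞)` they also
vanish at infinity. -/
def exponentialSpan (s : Set ℝ) : Submodule ℝ (ℝ → ℝ) :=
  Submodule.span ℝ ((fun l y => Real.exp (-(l * y))) '' s)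

theorem exp_neg_mul_mem_exponentialSpan {s : Set ℝ} (hl : l ∈ s) :
    (fun y => Real.exp (-(l * y))) ∈ exponentialSpan s :=
  Submodule.subset_span (mem_image_of_mem _ hl)

theorem one_mem_exponentialSpan_Ici : 1 ∈ exponentialSpan (Ici 0) := by
  simpa [Pi.one_def] using exp_neg_mul_mem_exponentialSpan (self_mem_Ici (a := (0 : ℝ)))

theorem isTestFunction_of_mem_exponentialSpan (hp : p ∈ exponentialSpan (Ici 0)) :
    IsTestFunction p := by
  induction hp using Submodule.span_induction with
  | mem p hp =>
    obtain ⟨l, hl, rfl⟩ := hp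
    exact isTestFunction_exp_neg_mul hl
  | zero => simpa using isTestFunction_one.const_smul 0
  | add p q _ _ hp hq => exact hp.add hq
  | smul c p _ hp => exact hp.const_smul c

/-- The measures `μ t` solve the forward (Kolmogorov) equation `d/dt ∫ g dμ_t = ∫ L g dμ_t` for
the CB generator, started from the unit mass at `x` and tested against `g`. The time derivative
is the right derivative, and continuity is recorded separately. -/
structure SolvesForwardEquation (β σ : ℝ) (m : Measure ℝ) (μ : ℝ → Measure ℝ) (x : ℝ)
    (g : ℝ → ℝ) : Prop where
  integrable : ∀ t, 0 ≤ t → Integrable g (μ t)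
  integrable_cbGenerator : ∀ t, 0 ≤ t → Integrable (cbGenerator β σ m g) (μ t)
  initial : ∫ y, g y ∂(μ 0) = g x
  continuousOn : ContinuousOn (fun t => ∫ y, g y ∂(μ t)) (Ici 0)
  hasDerivWithinAt : ∀ t, 0 ≤ t →
    HasDerivWithinAt (fun s => ∫ y, g y ∂(μ s)) (∫ y, cbGenerator β σ m g y ∂(μ t)) (Ici t) t

namespace SolvesForwardEquation

theorem add (hm : IsFiniteMeanLevyMeasure m) (hμ : ∀ t, 0 ≤ t → ∀ᵐ y ∂(μ t), 0 ≤ y)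
    (hg : IsTestFunction g) (hh : IsTestFunction h) (hGg : SolvesForwardEquation β σ m μ x g)
    (hGh : SolvesForwardEquation β σ m μ x h) : SolvesForwardEquation β σ m μ x (g + h) := by
  have hgen : ∀ t, 0 ≤ t →
      cbGenerator β σ m (g + h) =ᵐ[μ t] cbGenerator β σ m g + cbGenerator β σ m h := fun t ht =>
    (hμ t ht).mono fun y hy => cbGenerator_add hm hg hh hy β σ
  have hadd : ∀ t ∈ Ici (0 : ℝ), ∫ y, (g + h) y ∂(μ t) = ∫ y, g y ∂(μ t) + ∫ y, h y ∂(μ t) :=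
    fun t ht => integral_add (hGg.integrable t ht) (hGh.integrable t ht)
  refine ⟨fun t ht => (hGg.integrable t ht).add (hGh.integrable t ht), fun t ht =>
    ((hGg.integrable_cbGenerator t ht).add (hGh.integrable_cbGenerator t ht)).congr
      (hgen t ht).symm, ?_, (hGg.continuousOn.add hGh.continuousOn).congr hadd, fun t ht => ?_⟩
  · rw [hadd 0 self_mem_Ici, hGg.initial, hGh.initial, Pi.add_apply]
  · rw [integral_congr_ae (hgen t ht), integral_add' (hGg.integrable_cbGenerator t ht)
      (hGh.integrable_cbGenerator t ht)]
    exact ((hGg.hasDerivWithinAt t ht).add (hGh.hasDerivWithinAt t ht)).congr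
      (fun s hs => hadd s (ht.trans hs)) (hadd t ht)

theorem const_smul (hg : SolvesForwardEquation β σ m μ x g) (c : ℝ) :
    SolvesForwardEquation β σ m μ x (c • g) := by
  have hgen : cbGenerator β σ m (c • g) = c • cbGenerator β σ m g :=
    funext (cbGenerator_const_smul β σ c m g)
  have hsmul : ∀ t, ∫ y, (c • g) y ∂(μ t) = c • ∫ y, g y ∂(μ t) := fun t => integral_smul c g
  refine ⟨fun t ht => (hg.integrable t ht).smul c, fun t ht => ?_, ?_, ?_, fun t ht => ?_⟩
  · rw [hgen]
    exact (hg.integrable_cbGenerator t ht).smul c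
  · rw [hsmul, hg.initial, Pi.smul_apply]
  · exact (hg.continuousOn.const_smul c).congr fun t _ => hsmul t
  · simp only [hgen, Pi.smul_apply, integral_smul]
    exact (hg.hasDerivWithinAt t ht).const_smul c

theorem integral_le_mul_exp (hg : SolvesForwardEquation β σ m μ x g)
    (hμ : ∀ t, 0 ≤ t → ∀ᵐ y ∂(μ t), 0 ≤ y)
    (hle : ∀ y, 0 ≤ y → cbGenerator β σ m g y ≤ c * g y) (ht : 0 ≤ t) :
    ∫ y, g y ∂(μ t) ≤ g x * Real.exp (c * t) := by
  rw [← hg.initial]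
  refine le_mul_exp_of_hasDerivWithinAt_le (hg.continuousOn.mono Icc_subset_Ici_self)
    (fun s hs => hg.hasDerivWithinAt s hs.1) (fun s hs => ?_) t ⟨ht, le_rfl⟩
  rw [← integral_const_mul]
  exact integral_mono_ae (hg.integrable_cbGenerator s hs.1) ((hg.integrable s hs.1).const_mul c)
    ((hμ s hs.1).mono hle)

end SolvesForwardEquation

variable {φ : ℝ → ℝ} {v : ℝ → ℝ → ℝ} {Q : ℝ → ℝ → Measure ℝ}

theorem IsCBSemigroup.solvesForwardEquation_exp_neg_mul (hQ : IsCBSemigroup v Q)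
    (hφ : IsBranchingMechanism φ β σ m) (hm : IsFiniteMeanLevyMeasure m) (hv : IsCumulant φ v)
    (hx : 0 ≤ x) (hl : 0 ≤ l) :
    SolvesForwardEquation β σ m (fun t => Q t x) x fun y => Real.exp (-(l * y)) := by
  have hLaplace : ∀ t ∈ Ici (0 : ℝ),
      ∫ y, Real.exp (-(l * y)) ∂(Q t x) = Real.exp (-(x * v t l)) :=
    fun t ht => (hQ t x ht hx).2.2 l hl
  have hgen := funext (hφ.cbGenerator_exp_neg_mul hl)
  refine ⟨fun t ht => ?_, fun t ht => ?_, ?_, ?_, fun t ht => ?_⟩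
  · have := (hQ t x ht hx).1
    exact integrable_exp_neg_mul_of_ae_nonneg (hQ.ae_nonneg ht hx) hl
  · have := (hQ t x ht hx).1
    rw [hgen]
    rcases hl.eq_or_lt with rfl | hl
    · simp [hφ.apply_zero]
    · exact (integrable_mul_exp_neg_mul_of_ae_nonneg (hQ.ae_nonneg ht hx) hl).const_mul _
  · rw [hLaplace 0 self_mem_Ici, hv.apply_zero hl, mul_comm]
  · exact (((hv.continuousOn (hφ.isRegularMechanism hm) hl).const_mul x).neg.rexp).congr hLaplace
  · simp only [hgen, integral_const_mul]
    rcases hl.eq_or_lt with rfl | hl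
    · have hone : ∀ s ∈ Ici t, ∫ y, Real.exp (-(0 * y)) ∂(Q s x) = 1 := fun s hs => by
        have := (hQ s x (ht.trans hs) hx).1
        simp
      rw [hφ.apply_zero, zero_mul]
      exact (hasDerivWithinAt_const t (Ici t) 1).congr hone (hone t self_mem_Ici)
    · exact hQ.hasDerivWithinAt_integral_exp (hφ.isRegularMechanism hm) hv hx hl ht

theorem IsCBSemigroup.solvesForwardEquation (hQ : IsCBSemigroup v Q)
    (hφ : IsBranchingMechanism φ β σ m) (hm : IsFiniteMeanLevyMeasure m) (hv : IsCumulant φ v)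
    (hx : 0 ≤ x) (hp : p ∈ exponentialSpan (Ici 0)) :
    SolvesForwardEquation β σ m (fun t => Q t x) x p := by
  induction hp using Submodule.span_induction with
  | mem p hp =>
    obtain ⟨l, hl, rfl⟩ := hp
    exact hQ.solvesForwardEquation_exp_neg_mul hφ hm hv hx hl
  | zero =>
    simpa using (hQ.solvesForwardEquation_exp_neg_mul hφ hm hv hx le_rfl).const_smul 0
  | add p q hp hq hGp hGq =>
    exact hGp.add hm (fun t ht => hQ.ae_nonneg ht hx) (isTestFunction_of_mem_exponentialSpan hp)
      (isTestFunction_of_mem_exponentialSpan hq) hGq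
  | smul c p _ hp => exact hp.const_smul c

end ExponentialSpan

section Approximation

variable {g g' p q w : ℝ → ℝ} {N Y η : ℝ}

theorem tendsto_zero_of_mem_exponentialSpan_Ioi (hp : p ∈ exponentialSpan (Ioi 0)) :
    Tendsto p atTop (nhds 0) := by
  induction hp using Submodule.span_induction with
  | mem p hp =>
    obtain ⟨l, hl, rfl⟩ := hp
    exact Real.tendsto_exp_neg_atTop_nhds_zero.comp (tendsto_id.const_mul_atTop hl)
  | zero => exact tendsto_const_nhds
  | add p q _ _ hp hq => simpa only [add_zero] using! hp.add hq
  | smul c p _ hp => simpa only [smul_zero] using! hp.const_smul c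

theorem exists_antiderivative_mem_exponentialSpan_Ioi (hq : q ∈ exponentialSpan (Ioi 0)) :
    ∃ p ∈ exponentialSpan (Ioi 0), ∀ y, HasDerivAt p (q y) y := by
  induction hq using Submodule.span_induction with
  | mem q hq =>
    obtain ⟨l, hl, rfl⟩ := hq
    have hl' : (l : ℝ) ≠ 0 := (mem_Ioi.1 hl).ne'
    refine ⟨(-l⁻¹) • fun y => Real.exp (-(l * y)),
      Submodule.smul_mem _ _ (exp_neg_mul_mem_exponentialSpan hl), fun y => ?_⟩
    have hlin : HasDerivAt (fun y => -(l * y)) (-l) y := by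
      simpa using ((hasDerivAt_id' y).const_mul l).fun_neg
    refine (hlin.exp.const_smul (-l⁻¹)).congr_deriv ?_
    rw [smul_eq_mul]
    field_simp
  | zero => exact ⟨0, Submodule.zero_mem _, fun y => hasDerivAt_const y 0⟩
  | add q₁ q₂ _ _ h₁ h₂ =>
    obtain ⟨p₁, hp₁, hderiv₁⟩ := h₁
    obtain ⟨p₂, hp₂, hderiv₂⟩ := h₂
    exact ⟨p₁ + p₂, Submodule.add_mem _ hp₁ hp₂, fun y => (hderiv₁ y).add (hderiv₂ y)⟩
  | smul c q _ h =>
    obtain ⟨p, hp, hderiv⟩ := h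
    exact ⟨c • p, Submodule.smul_mem _ c hp, fun y => (hderiv y).const_smul c⟩

theorem exp_neg_mul_eval_mem_exponentialSpan_Ioi (P : Polynomial ℝ) :
    (fun y => Real.exp (-y) * P.eval (Real.exp (-y))) ∈ exponentialSpan (Ioi 0) := by
  have heq : (fun y => Real.exp (-y) * P.eval (Real.exp (-y))) =
      ∑ i ∈ Finset.range (P.natDegree + 1), P.coeff i • fun y => Real.exp (-((i + 1 : ℝ) * y)) := by
    ext y
    simp only [Polynomial.eval_eq_sum_range, Finset.mul_sum, Finset.sum_apply, Pi.smul_apply,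
      smul_eq_mul, ← Real.exp_nat_mul]
    refine Finset.sum_congr rfl fun i _ => ?_
    rw [mul_left_comm, ← Real.exp_add]
    ring_nf
  rw [heq]
  exact Submodule.sum_mem _ fun i _ => Submodule.smul_mem _ _
    (exp_neg_mul_mem_exponentialSpan (mem_Ioi.2 (by positivity)))

theorem exists_mem_exponentialSpan_Ioi_abs_sub_le (hw : Continuous w)
    (hY : ∀ y, Y ≤ y → w y = 0) (hη : 0 < η) :
    ∃ q ∈ exponentialSpan (Ioi 0), ∀ y, 0 ≤ y → |w y - q y| ≤ η * Real.exp (-y) := by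
  -- In the variable `u = e^{-y} ∈ (0, 1]` the function `w y * e^y` extends continuously by `0`
  -- to `u ≤ e^{-Y}`, so that Weierstrass' theorem applies on `[0, 1]`.
  set W : ℝ → ℝ := fun u =>
    w (-Real.log (max u (Real.exp (-Y)))) * (max u (Real.exp (-Y)))⁻¹ with hW
  have hpos : ∀ u, max u (Real.exp (-Y)) ≠ 0 := fun u => (lt_max_of_lt_right (Real.exp_pos _)).ne'
  have hWcont : Continuous W := by
    have hmax : Continuous fun u => max u (Real.exp (-Y)) := by fun_prop
    exact (hw.comp (hmax.log hpos).neg).mul (hmax.inv₀ hpos)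
  have hWexp : ∀ y, w y = Real.exp (-y) * W (Real.exp (-y)) := by
    intro y
    rcases le_total y Y with hy | hy
    · simp only [hW, max_eq_left (Real.exp_le_exp.2 (neg_le_neg hy)), Real.log_exp, neg_neg]
      field_simp
    · simp only [hW, max_eq_right (Real.exp_le_exp.2 (neg_le_neg hy)), Real.log_exp, neg_neg,
        hY Y le_rfl, hY y hy, zero_mul, mul_zero]
  obtain ⟨P, hP⟩ := exists_polynomial_near_of_continuousOn 0 1 W hWcont.continuousOn η hη
  refine ⟨_, exp_neg_mul_eval_mem_exponentialSpan_Ioi P, fun y hy => ?_⟩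
  have hnear := hP (Real.exp (-y)) ⟨(Real.exp_pos _).le, Real.exp_le_one_iff.2 (neg_nonpos.2 hy)⟩
  rw [hWexp y, ← mul_sub, abs_mul, Real.abs_exp, abs_sub_comm, mul_comm]
  gcongr

theorem le_mul_exp_neg_of_deriv_ge (hg : ∀ y, HasDerivAt g (g' y) y)
    (hg' : ∀ y, 0 ≤ y → -(η * Real.exp (-y)) ≤ g' y) (hlim : Tendsto g atTop (nhds 0)) :
    ∀ y, 0 ≤ y → g y ≤ η * Real.exp (-y) := by
  intro y hy
  have hderiv : ∀ y, HasDerivAt (fun y => g y - η * Real.exp (-y))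
      (g' y + η * Real.exp (-y)) y := fun y =>
    ((hg y).fun_sub ((hasDerivAt_neg y).exp.const_mul η)).congr_deriv (by ring)
  have hmono : MonotoneOn (fun y => g y - η * Real.exp (-y)) (Ici 0) := by
    refine monotoneOn_of_hasDerivWithinAt_nonneg (convex_Ici 0)
      (fun y _ => (hderiv y).continuousAt.continuousWithinAt)
      (fun y _ => (hderiv y).hasDerivWithinAt) fun y hy => ?_
    linarith [hg' y (interior_subset hy)]
  have hlim' : Tendsto (fun y => g y - η * Real.exp (-y)) atTop (nhds 0) := by
    simpa using hlim.sub (Real.tendsto_exp_neg_atTop_nhds_zero.const_mul η)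
  refine sub_nonpos.1 (ge_of_tendsto hlim' ?_)
  filter_upwards [eventually_ge_atTop y] with s hs using hmono hy (hy.trans hs) hs

theorem abs_le_mul_exp_neg_of_abs_deriv_le (hg : ∀ y, HasDerivAt g (g' y) y)
    (hg' : ∀ y, 0 ≤ y → |g' y| ≤ η * Real.exp (-y)) (hlim : Tendsto g atTop (nhds 0)) :
    ∀ y, 0 ≤ y → |g y| ≤ η * Real.exp (-y) := fun y hy =>
  abs_le'.2 ⟨le_mul_exp_neg_of_deriv_ge hg (fun y hy => neg_le_of_abs_le (hg' y hy)) hlim y hy,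
    le_mul_exp_neg_of_deriv_ge (fun y => (hg y).neg)
      (fun y hy => neg_le_neg (le_of_abs_le (hg' y hy)))
      (by simpa only [neg_zero] using! hlim.neg) y hy⟩

theorem exists_antiderivative_abs_sub_le (hg : ∀ y, HasDerivAt g (g' y) y)
    (hlim : Tendsto g atTop (nhds N)) (hq : q ∈ exponentialSpan (Ioi 0))
    (hg' : ∀ y, 0 ≤ y → |g' y - q y| ≤ η * Real.exp (-y)) :
    ∃ p ∈ exponentialSpan (Ioi 0), (∀ y, HasDerivAt p (q y) y) ∧
      ∀ y, 0 ≤ y → |g y - (p y + N)| ≤ η * Real.exp (-y) := by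
  obtain ⟨p, hp, hderiv⟩ := exists_antiderivative_mem_exponentialSpan_Ioi hq
  exact ⟨p, hp, hderiv, abs_le_mul_exp_neg_of_abs_deriv_le
    (fun y => (hg y).fun_sub ((hderiv y).add_const N)) hg'
    (by simpa using hlim.sub ((tendsto_zero_of_mem_exponentialSpan_Ioi hp).add_const N))⟩

theorem exists_mem_exponentialSpan_Ici_abs_sub_le (hg : ContDiff ℝ 2 g)
    (hY : ∀ y, Y ≤ y → g y = N) (hη : 0 < η) :
    ∃ p ∈ exponentialSpan (Ici 0), ∀ y, 0 ≤ y → |p y - g y| ≤ η * Real.exp (-y) ∧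
      |deriv (p - g) y| ≤ η * Real.exp (-y) ∧ |deriv (deriv (p - g)) y| ≤ η * Real.exp (-y) := by
  have hderiv : ∀ y, Y < y → deriv g y = 0 := fun y hy =>
    (EventuallyEq.deriv_eq ((eventually_gt_nhds hy).mono fun w hw => hY w hw.le)).trans
      (deriv_const y N)
  have hderiv₂ : ∀ y, Y < y → deriv (deriv g) y = 0 := fun y hy =>
    (EventuallyEq.deriv_eq ((eventually_gt_nhds hy).mono hderiv)).trans (deriv_const y 0)
  obtain ⟨q₂, hq₂, hnear₂⟩ := exists_mem_exponentialSpan_Ioi_abs_sub_le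
    hg.deriv'.continuous_deriv_one (fun y hy => hderiv₂ y ((lt_add_one Y).trans_le hy)) hη
  obtain ⟨q₁, hq₁, hq₁', hnear₁⟩ := exists_antiderivative_abs_sub_le (N := 0)
    (fun y => (hg.differentiable_deriv_two y).hasDerivAt)
    (tendsto_const_nhds.congr' ((eventually_gt_atTop Y).mono fun y hy => (hderiv y hy).symm))
    hq₂ hnear₂
  simp only [add_zero] at hnear₁
  obtain ⟨q₀, hq₀, hq₀', hnear₀⟩ := exists_antiderivative_abs_sub_le (N := N)
    (fun y => (hg.differentiable two_ne_zero y).hasDerivAt)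
    (tendsto_const_nhds.congr' ((eventually_ge_atTop Y).mono fun y hy => (hY y hy).symm))
    hq₁ hnear₁
  have hsub : deriv (q₀ + N • 1 - g) = q₁ - deriv g := funext fun y => by
    have hconst : HasDerivAt (N • (1 : ℝ → ℝ)) 0 y := hasDerivAt_const y (N * 1)
    simpa using! (((hq₀' y).add hconst).sub (hg.differentiable two_ne_zero y).hasDerivAt).deriv
  have hsub₂ : deriv (q₁ - deriv g) = q₂ - deriv (deriv g) := funext fun y =>
    ((hq₁' y).sub (hg.differentiable_deriv_two y).hasDerivAt).deriv
  refine ⟨q₀ + N • 1, Submodule.add_mem _ (Submodule.span_mono (image_mono Ioi_subset_Ici_self) hq₀)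
    (Submodule.smul_mem _ N one_mem_exponentialSpan_Ici), fun y hy => ?_⟩
  rw [hsub, hsub₂, abs_sub_comm, Pi.sub_apply, Pi.sub_apply, abs_sub_comm (q₁ y),
    abs_sub_comm (q₂ y)]
  exact ⟨by simpa using hnear₀ y hy, hnear₁ y hy, hnear₂ y hy⟩

end Approximation

section Lyapunov

variable {φ g : ℝ → ℝ} {v : ℝ → ℝ → ℝ} {Q : ℝ → ℝ → Measure ℝ} {m : Measure ℝ}
  {β σ B N Y η t x : ℝ}

theorem exists_mem_exponentialSpan_abs_cbGenerator_sub_le (hm : IsFiniteMeanLevyMeasure m)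
    (hg : ContDiff ℝ 2 g) (hY : ∀ y, Y ≤ y → g y = N) (β σ : ℝ) (hη : 0 < η) :
    ∃ p ∈ exponentialSpan (Ici 0), ∀ y, 0 ≤ y →
      |p y - g y| ≤ η ∧ |cbGenerator β σ m p y - cbGenerator β σ m g y| ≤ η := by
  obtain ⟨M, hM, hbound⟩ := exists_abs_cbGenerator_le hm β σ
  have hκ : 0 < η / (1 + M) := by positivity
  obtain ⟨p, hp, hnear⟩ := exists_mem_exponentialSpan_Ici_abs_sub_le hg hY hκ
  set κ := η / (1 + M)
  have hκη : κ + M * κ = η := by rw [← one_add_mul, mul_div_cancel₀ η (by positivity)]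
  have hp_test := isTestFunction_of_mem_exponentialSpan hp
  have hexp : ∀ y, 0 ≤ y → κ * Real.exp (-y) ≤ κ := fun y hy =>
    mul_le_of_le_one_right hκ.le (Real.exp_le_one_iff.2 (neg_nonpos.2 hy))
  have herror_test : IsTestFunction (p - g) := ⟨hp_test.contDiff.sub hg, κ, fun y hy =>
    ⟨(hnear y hy).2.1.trans (hexp y hy), (hnear y hy).2.2.trans (hexp y hy)⟩⟩
  refine ⟨p, hp, fun y hy => ⟨((hnear y hy).1.trans (hexp y hy)).trans (by nlinarith), ?_⟩⟩
  have hgen : cbGenerator β σ m p y - cbGenerator β σ m g y = cbGenerator β σ m (p - g) y := by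
    have hadd := cbGenerator_add hm hp_test (herror_test.const_smul (-1)) hy β σ
    rw [cbGenerator_const_smul, neg_one_smul, neg_sub, add_sub_cancel] at hadd
    linarith
  have hdecay : ∀ w, y ≤ w → κ * Real.exp (-w) ≤ κ * Real.exp (-y) := fun w hw => by gcongr
  calc |cbGenerator β σ m p y - cbGenerator β σ m g y|
      ≤ M * (κ * Real.exp (-y)) * y := by
        rw [hgen]
        exact hbound _ herror_test.contDiff y _ hy fun w hw =>
          ⟨(hnear w (hy.trans hw)).2.1.trans (hdecay w hw),
            (hnear w (hy.trans hw)).2.2.trans (hdecay w hw)⟩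
    _ = M * κ * (y * Real.exp (-y)) := by ring
    _ ≤ M * κ := mul_le_of_le_one_right (by positivity)
        ((Real.mul_exp_neg_le_exp_neg_one y).trans (Real.exp_le_one_iff.2 (by norm_num)))
    _ ≤ η := by linarith

-- A small constant added to an exponential polynomial `q` close to `g` restores the Lyapunov
-- inequality: it leaves `L q` unchanged but increases `B * q`.
theorem exists_mem_exponentialSpan_lyapunov (hm : IsFiniteMeanLevyMeasure m)
    (hg : ContDiff ℝ 2 g) (hY : ∀ y, Y ≤ y → g y = N) (hB : 0 < B)
    (hL : ∀ y, 0 ≤ y → cbGenerator β σ m g y ≤ B * g y) (hη : 0 < η) :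
    ∃ p ∈ exponentialSpan (Ici 0), (∀ y, 0 ≤ y → cbGenerator β σ m p y ≤ B * p y) ∧
      ∀ y, 0 ≤ y → g y ≤ p y ∧ p y ≤ g y + η := by
  have hκ : 0 < η / (2 + 1 / B) := by positivity
  obtain ⟨q, hq, hnear⟩ :=
    exists_mem_exponentialSpan_abs_cbGenerator_sub_le hm hg hY β σ hκ
  set κ := η / (2 + 1 / B)
  set c := κ * (1 + 1 / B)
  have hκη : c + κ = η := by
    simp only [c, κ]
    field_simp
    ring
  have hBc : B * c = B * κ + κ := by
    simp only [c]
    field_simp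
  have hκc : κ ≤ c := le_mul_of_one_le_right hκ.le (le_add_of_nonneg_right (by positivity))
  refine ⟨q + c • 1, Submodule.add_mem _ hq (Submodule.smul_mem _ c one_mem_exponentialSpan_Ici),
    fun y hy => ?_, fun y hy => ?_⟩
  · rw [cbGenerator_add hm (isTestFunction_of_mem_exponentialSpan hq)
      (isTestFunction_one.const_smul c) hy, cbGenerator_const_smul, cbGenerator_one]
    simp only [Pi.add_apply, Pi.smul_apply, Pi.one_apply, smul_eq_mul, mul_one, mul_zero]
    have hlower := mul_le_mul_of_nonneg_left (neg_le_of_abs_le (hnear y hy).1) hB.le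
    linarith [hL y hy, le_of_abs_le (hnear y hy).2]
  · simp only [Pi.add_apply, Pi.smul_apply, Pi.one_apply, smul_eq_mul, mul_one]
    have hclose := abs_le.1 (hnear y hy).1
    constructor <;> linarith [hclose.1, hclose.2]

theorem IsCBSemigroup.lintegral_ofReal_le_of_lyapunov (hQ : IsCBSemigroup v Q)
    (hφ : IsBranchingMechanism φ β σ m) (hm : IsFiniteMeanLevyMeasure m) (hv : IsCumulant φ v)
    (hg : ContDiff ℝ 2 g) (hY : ∀ y, Y ≤ y → g y = N) (hg_nonneg : ∀ y, 0 ≤ y → 0 ≤ g y)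
    (hB : 0 < B) (hL : ∀ y, 0 ≤ y → cbGenerator β σ m g y ≤ B * g y)
    (hx : 0 ≤ x) (ht : 0 ≤ t) :
    ∫⁻ y, ENNReal.ofReal (g y) ∂(Q t x) ≤ ENNReal.ofReal (g x * Real.exp (B * t)) := by
  have hμ := hQ.ae_nonneg ht hx
  have happrox : ∀ η, 0 < η → ∫⁻ y, ENNReal.ofReal (g y) ∂(Q t x) ≤
      ENNReal.ofReal ((g x + η) * Real.exp (B * t)) := by
    intro η hη
    obtain ⟨p, hp, hLp, hgp⟩ := exists_mem_exponentialSpan_lyapunov hm hg hY hB hL hη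
    have hforward := hQ.solvesForwardEquation hφ hm hv hx hp
    calc ∫⁻ y, ENNReal.ofReal (g y) ∂(Q t x)
        ≤ ∫⁻ y, ENNReal.ofReal (p y) ∂(Q t x) :=
          lintegral_mono_ae (hμ.mono fun y hy => ENNReal.ofReal_le_ofReal (hgp y hy).1)
      _ = ENNReal.ofReal (∫ y, p y ∂(Q t x)) :=
          (ofReal_integral_eq_lintegral_ofReal (hforward.integrable t ht)
            (hμ.mono fun y hy => (hg_nonneg y hy).trans (hgp y hy).1)).symm
      _ ≤ ENNReal.ofReal ((g x + η) * Real.exp (B * t)) := by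
          refine ENNReal.ofReal_le_ofReal ((hforward.integral_le_mul_exp
            (fun s hs => hQ.ae_nonneg hs hx) hLp ht).trans ?_)
          gcongr
          exact (hgp x hx).2
  have hlim : Tendsto (fun η => ENNReal.ofReal ((g x + η) * Real.exp (B * t)))
      (nhdsWithin 0 (Ioi 0)) (nhds (ENNReal.ofReal (g x * Real.exp (B * t)))) := by
    have hcont : Continuous fun η => ENNReal.ofReal ((g x + η) * Real.exp (B * t)) :=
      ENNReal.continuous_ofReal.comp (by fun_prop)
    simpa using hcont.continuousWithinAt.tendsto (x := 0)
  exact ge_of_tendsto hlim (eventually_mem_nhdsWithin.mono happrox)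

end Lyapunov

section Smoothing

variable {h : ℝ → ℝ}

/-- The moving average of `h` over unit intervals, `y ↦ ∫_y^{y+1} h(s) ds`, which gains one
derivative over `h`. -/
def unitAverage (h : ℝ → ℝ) (y : ℝ) : ℝ :=
  ∫ s in y..y + 1, h s

theorem hasDerivAt_unitAverage (hh : Continuous h) (y : ℝ) :
    HasDerivAt (unitAverage h) (h (y + 1) - h y) y := by
  have hprimitive : ∀ y, HasDerivAt (fun y => ∫ s in (0 : ℝ)..y, h s) (h y) y := fun y =>
    (hh.integral_hasStrictDerivAt 0 y).hasDerivAt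
  refine (((hprimitive (y + 1)).comp_add_const y 1).fun_sub (hprimitive y)).congr_of_eventuallyEq
    (.of_forall fun y => ?_)
  exact (intervalIntegral.integral_interval_sub_left (hh.intervalIntegrable _ _)
    (hh.intervalIntegrable _ _)).symm

theorem deriv_unitAverage (hh : Continuous h) :
    deriv (unitAverage h) = fun y => h (y + 1) - h y :=
  funext fun y => (hasDerivAt_unitAverage hh y).deriv

theorem contDiff_unitAverage {n : ℕ} (hh : ContDiff ℝ n h) :
    ContDiff ℝ (n + 1) (unitAverage h) := by
  refine contDiff_succ_iff_deriv.2
    ⟨fun y => (hasDerivAt_unitAverage hh.continuous y).differentiableAt, by simp, ?_⟩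
  rw [deriv_unitAverage hh.continuous]
  exact (hh.comp (contDiff_id.add contDiff_const)).sub hh

theorem continuous_unitAverage (hh : Continuous h) : Continuous (unitAverage h) :=
  continuous_iff_continuousAt.2 fun y => (hasDerivAt_unitAverage hh y).continuousAt

theorem le_unitAverage (hh : Monotone h) (y : ℝ) : h y ≤ unitAverage h y := by
  have := intervalIntegral.integral_mono_on (μ := volume) (le_add_of_nonneg_right zero_le_one)
    intervalIntegrable_const hh.intervalIntegrable fun s (hs : s ∈ Icc y (y + 1)) => hh hs.1
  simpa [unitAverage] using this

theorem unitAverage_le (hh : Monotone h) (y : ℝ) : unitAverage h y ≤ h (y + 1) := by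
  have := intervalIntegral.integral_mono_on (μ := volume) (le_add_of_nonneg_right zero_le_one)
    hh.intervalIntegrable intervalIntegrable_const fun s (hs : s ∈ Icc y (y + 1)) => hh hs.2
  simpa [unitAverage] using this

theorem monotone_unitAverage (hh : Monotone h) (hc : Continuous h) : Monotone (unitAverage h) :=
  monotone_of_hasDerivAt_nonneg (hasDerivAt_unitAverage hc) fun _ =>
    sub_nonneg.2 (hh (le_add_of_nonneg_right zero_le_one))

theorem exists_contDiff_two_smoothing (hh : Monotone h) (hc : Continuous h) :
    ∃ g, ContDiff ℝ 2 g ∧ (∀ y, h y ≤ g y ∧ g y ≤ h (y + 2)) ∧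
      ∀ y, |deriv g y| ≤ h (y + 2) - h y ∧ |deriv (deriv g) y| ≤ h (y + 2) - h y := by
  have hA := monotone_unitAverage hh hc
  have hAc := continuous_unitAverage hc
  have hderiv : deriv (unitAverage (unitAverage h)) =
      fun y => unitAverage h (y + 1) - unitAverage h y := deriv_unitAverage hAc
  have hderiv₂ : ∀ y, deriv (deriv (unitAverage (unitAverage h))) y =
      (h (y + 1 + 1) - h (y + 1)) - (h (y + 1) - h y) := fun y => by
    rw [hderiv]
    exact (((hasDerivAt_unitAverage hc (y + 1)).comp_add_const y 1).fun_sub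
      (hasDerivAt_unitAverage hc y)).deriv
  have htwo : ∀ y : ℝ, y + 2 = y + 1 + 1 := fun y => by ring
  have hstep : ∀ y, h y ≤ h (y + 1) := fun y => hh (le_add_of_nonneg_right zero_le_one)
  refine ⟨unitAverage (unitAverage h), ?_, fun y => ⟨?_, ?_⟩, fun y => ⟨?_, ?_⟩⟩
  · have hone : ContDiff ℝ 1 (unitAverage h) := by
      simpa using contDiff_unitAverage (n := 0) (contDiff_zero.2 hc)
    simpa only [Nat.cast_one, one_add_one_eq_two] using contDiff_unitAverage (n := 1) hone
  · exact (le_unitAverage hh y).trans (le_unitAverage hA y)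
  · exact (unitAverage_le hA y).trans ((unitAverage_le hh _).trans_eq (by rw [htwo]))
  · rw [hderiv, abs_of_nonneg (sub_nonneg.2 (hA (le_add_of_nonneg_right zero_le_one))), htwo]
    exact sub_le_sub (unitAverage_le hh _) (le_unitAverage hh y)
  · rw [hderiv₂, htwo, abs_le]
    constructor <;> linarith [hstep y, hstep (y + 1)]

end Smoothing

section ModerateGrowth

/-- A profile `h` whose increments satisfy `h(y + z) - h(y) = O(h(y) / y)` for bounded `z` and
`O(h(y) w(z) / y)` for large `z`, with `D` the implied constant. This makes a smoothing of `h`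
a Lyapunov function for `cbGenerator`, provided the weight `w` has finite integral over the large
jumps. The shifts by `3` and `z + 2`, instead of `1` and `z`, leave room for
`exists_contDiff_two_smoothing`. -/
structure HasModerateGrowth (h w : ℝ → ℝ) (D : ℝ) : Prop where
  continuous : Continuous h
  monotone : Monotone h
  nonneg : ∀ y, 0 ≤ h y
  const_nonneg : 0 ≤ D
  weight_nonneg : ∀ z, 1 < z → 0 ≤ w z
  small_increment : ∀ y, 0 ≤ y → y * (h (y + 3) - h y) ≤ D * h y
  large_increment : ∀ y z, 0 ≤ y → 1 < z → y * (h (y + z + 2) - h y) ≤ D * w z * h y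

variable {h w g : ℝ → ℝ} {D β σ x t y z : ℝ} {m : Measure ℝ} {φ : ℝ → ℝ} {v : ℝ → ℝ → ℝ}
  {Q : ℝ → ℝ → Measure ℝ}

theorem mul_min_sub_min_le {a b n C : ℝ} (hy : 0 ≤ y) (hC : 0 ≤ C) (hn : 0 ≤ n) (hab : a ≤ b)
    (hincrement : y * (b - a) ≤ C * a) : y * (min b n - min a n) ≤ C * min a n := by
  rcases le_total n a with hna | han
  · rw [min_eq_right hna, min_eq_right (hna.trans hab), sub_self, mul_zero]
    positivity
  · rw [min_eq_left han]
    exact (mul_le_mul_of_nonneg_left (sub_le_sub_right (min_le_left b n) a) hy).trans hincrement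

theorem HasModerateGrowth.min_const (hh : HasModerateGrowth h w D) {n : ℝ} (hn : 0 ≤ n) :
    HasModerateGrowth (fun y => min (h y) n) w D where
  continuous := hh.continuous.min continuous_const
  monotone _ _ hab := min_le_min_right n (hh.monotone hab)
  nonneg y := le_min (hh.nonneg y) hn
  const_nonneg := hh.const_nonneg
  weight_nonneg := hh.weight_nonneg
  small_increment y hy := mul_min_sub_min_le hy hh.const_nonneg hn
    (hh.monotone (by linarith)) (hh.small_increment y hy)
  large_increment y z hy hz := mul_min_sub_min_le hy
    (mul_nonneg hh.const_nonneg (hh.weight_nonneg z hz)) hn (hh.monotone (by linarith))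
    (hh.large_increment y z hy hz)

theorem HasModerateGrowth.mul_compensatedJump_le (hh : HasModerateGrowth h w D)
    (hg : ContDiff ℝ 2 g) (hgh : ∀ y, h y ≤ g y ∧ g y ≤ h (y + 2))
    (hg₂ : ∀ y, |deriv (deriv g) y| ≤ h (y + 2) - h y) (hy : 0 ≤ y) (hz : 0 < z) :
    y * compensatedJump g y z ≤ D * h y * (min z (z ^ 2) + (Ioi 1).indicator w z) := by
  have hDh : 0 ≤ D * h y := mul_nonneg hh.const_nonneg (hh.nonneg y)
  rcases le_or_gt z 1 with hz1 | hz1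
  · have hsecond : ∀ u ∈ Icc y (y + z), |deriv (deriv g) u| ≤ h (y + 3) - h y := fun u hu =>
      (hg₂ u).trans (sub_le_sub (hh.monotone (by linarith [hu.2])) (hh.monotone hu.1))
    rw [indicator_of_notMem (notMem_Ioi.2 hz1), add_zero, min_eq_right (by nlinarith)]
    calc y * compensatedJump g y z ≤ y * ((h (y + 3) - h y) * z ^ 2) :=
          mul_le_mul_of_nonneg_left
            ((le_abs_self _).trans (abs_compensatedJump_le_mul_sq hg hz.le hz1 hsecond)) hy
      _ = y * (h (y + 3) - h y) * z ^ 2 := (mul_assoc _ _ _).symm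
      _ ≤ D * h y * z ^ 2 :=
          mul_le_mul_of_nonneg_right (hh.small_increment y hy) (sq_nonneg z)
  · rw [indicator_of_mem (mem_Ioi.2 hz1), compensatedJump, if_neg hz1.not_ge, sub_zero]
    have hmin : 0 ≤ min z (z ^ 2) := le_min hz.le (sq_nonneg z)
    calc y * (g (y + z) - g y) ≤ y * (h (y + z + 2) - h y) :=
          mul_le_mul_of_nonneg_left (sub_le_sub (hgh _).2 (hgh y).1) hy
      _ ≤ D * w z * h y := hh.large_increment y z hy hz1
      _ = D * h y * w z := by ring
      _ ≤ D * h y * (min z (z ^ 2) + w z) :=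
          mul_le_mul_of_nonneg_left (le_add_of_nonneg_left hmin) hDh

theorem HasModerateGrowth.mul_abs_le {d : ℝ} (hh : HasModerateGrowth h w D) (hy : 0 ≤ y)
    (hd : |d| ≤ h (y + 2) - h y) : y * |d| ≤ D * h y :=
  (mul_le_mul_of_nonneg_left (hd.trans (sub_le_sub_right (hh.monotone (by linarith)) _)) hy).trans
    (hh.small_increment y hy)

theorem HasModerateGrowth.cbGenerator_le (hh : HasModerateGrowth h w D)
    (hm : IsFiniteMeanLevyMeasure m) (hw : IntegrableOn w (Ioi 1) m) (hg : IsTestFunction g)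
    (hgh : ∀ y, h y ≤ g y ∧ g y ≤ h (y + 2))
    (hg' : ∀ y, |deriv g y| ≤ h (y + 2) - h y ∧ |deriv (deriv g) y| ≤ h (y + 2) - h y)
    (hy : 0 ≤ y) (β σ : ℝ) :
    cbGenerator β σ m g y ≤
      (|β| + σ ^ 2 / 2 + ∫ z, (min z (z ^ 2) + (Ioi 1).indicator w z) ∂m) * (D * h y) := by
  have hdrift : y * -(β * deriv g y) ≤ |β| * (D * h y) :=
    calc y * -(β * deriv g y) ≤ |y * -(β * deriv g y)| := le_abs_self _
      _ = |β| * (y * |deriv g y|) := by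
          rw [abs_mul, abs_neg, abs_mul, abs_of_nonneg hy]
          ring
      _ ≤ |β| * (D * h y) :=
          mul_le_mul_of_nonneg_left (hh.mul_abs_le hy (hg' y).1) (abs_nonneg β)
  have hdiffusion : y * (σ ^ 2 / 2 * deriv (deriv g) y) ≤ σ ^ 2 / 2 * (D * h y) :=
    calc y * (σ ^ 2 / 2 * deriv (deriv g) y) = σ ^ 2 / 2 * (y * deriv (deriv g) y) := by ring
      _ ≤ σ ^ 2 / 2 * (y * |deriv (deriv g) y|) := by
          gcongr
          exact le_abs_self _
      _ ≤ σ ^ 2 / 2 * (D * h y) :=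
          mul_le_mul_of_nonneg_left (hh.mul_abs_le hy (hg' y).2) (by positivity)
  have hjump : y * ∫ z, compensatedJump g y z ∂m ≤
      D * h y * ∫ z, (min z (z ^ 2) + (Ioi 1).indicator w z) ∂m := by
    rw [← integral_const_mul, ← integral_const_mul]
    refine integral_mono_ae ((hg.integrable_compensatedJump hm hy).const_mul y)
      ((hm.integrable_min.add (hw.integrable_indicator measurableSet_Ioi)).const_mul _) ?_
    filter_upwards [hm.ae_pos] with z hz using
      hh.mul_compensatedJump_le hg.contDiff hgh (fun y => (hg' y).2) hy hz
  rw [cbGenerator]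
  linarith

/-- The exponential growth rate obtained for a profile of moderate growth; the summand `1` only
makes it positive. -/
def growthRate (β σ : ℝ) (m : Measure ℝ) (w : ℝ → ℝ) (D : ℝ) : ℝ :=
  (|β| + σ ^ 2 / 2 + ∫ z, (min z (z ^ 2) + (Ioi 1).indicator w z) ∂m) * D + 1

theorem HasModerateGrowth.growthRate_pos (hh : HasModerateGrowth h w D)
    (hm : IsFiniteMeanLevyMeasure m) (β σ : ℝ) : 0 < growthRate β σ m w D := by
  have hjump : 0 ≤ ∫ z, (min z (z ^ 2) + (Ioi 1).indicator w z) ∂m :=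
    integral_nonneg_of_ae (hm.ae_pos.mono fun z hz => add_nonneg (le_min hz.le (sq_nonneg z))
      (indicator_nonneg hh.weight_nonneg z))
  have hD := hh.const_nonneg
  unfold growthRate
  positivity

theorem HasModerateGrowth.exists_smoothing_cbGenerator_le (hh : HasModerateGrowth h w D)
    (hm : IsFiniteMeanLevyMeasure m) (hw : IntegrableOn w (Ioi 1) m) {N : ℝ}
    (hN : ∀ y, h y ≤ N) (β σ : ℝ) :
    ∃ g, ContDiff ℝ 2 g ∧ (∀ y, h y ≤ g y ∧ g y ≤ h (y + 2)) ∧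
      ∀ y, 0 ≤ y → cbGenerator β σ m g y ≤ growthRate β σ m w D * g y := by
  obtain ⟨g, hg, hgh, hg'⟩ := exists_contDiff_two_smoothing hh.monotone hh.continuous
  have htest : IsTestFunction g := by
    refine ⟨hg, N, fun y _ => ?_⟩
    have hrange : h (y + 2) - h y ≤ N := by linarith [hN (y + 2), hh.nonneg y]
    exact ⟨(hg' y).1.trans hrange, (hg' y).2.trans hrange⟩
  refine ⟨g, hg, hgh, fun y hy => ?_⟩
  have hbound := hh.cbGenerator_le hm hw htest hgh hg' hy β σ
  calc cbGenerator β σ m g y ≤ growthRate β σ m w D * h y := by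
        rw [growthRate]
        linarith [hh.nonneg y]
    _ ≤ growthRate β σ m w D * g y :=
        mul_le_mul_of_nonneg_left (hgh y).1 (hh.growthRate_pos hm β σ).le

theorem IsCBSemigroup.lintegral_ofReal_le_of_eventually_const (hQ : IsCBSemigroup v Q)
    (hφ : IsBranchingMechanism φ β σ m) (hm : IsFiniteMeanLevyMeasure m) (hv : IsCumulant φ v)
    (hh : HasModerateGrowth h w D) (hw : IntegrableOn w (Ioi 1) m) {N Y : ℝ}
    (hN : ∀ y, h y ≤ N) (hY : ∀ y, Y ≤ y → h y = N) (hx : 0 ≤ x) (ht : 0 ≤ t) :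
    ∫⁻ y, ENNReal.ofReal (h y) ∂(Q t x) ≤
      ENNReal.ofReal (h (x + 2) * Real.exp (growthRate β σ m w D * t)) := by
  obtain ⟨g, hg, hgh, hL⟩ := hh.exists_smoothing_cbGenerator_le hm hw hN β σ
  have hg_const : ∀ y, Y ≤ y → g y = N := fun y hy =>
    le_antisymm ((hgh y).2.trans (hN _)) ((hY y hy).symm.trans_le (hgh y).1)
  calc ∫⁻ y, ENNReal.ofReal (h y) ∂(Q t x)
      ≤ ∫⁻ y, ENNReal.ofReal (g y) ∂(Q t x) :=
        lintegral_mono fun y => ENNReal.ofReal_le_ofReal (hgh y).1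
    _ ≤ ENNReal.ofReal (g x * Real.exp (growthRate β σ m w D * t)) :=
        hQ.lintegral_ofReal_le_of_lyapunov hφ hm hv hg hg_const
          (fun y _ => (hh.nonneg y).trans (hgh y).1) (hh.growthRate_pos hm β σ) hL hx ht
    _ ≤ ENNReal.ofReal (h (x + 2) * Real.exp (growthRate β σ m w D * t)) := by
        gcongr
        exact (hgh x).2

theorem lintegral_ofReal_le_of_forall_nat_min_le {α : Type*} [MeasurableSpace α] {μ : Measure α}
    {u : α → ℝ} (hu : AEMeasurable u μ) {C : ENNReal}
    (hC : ∀ n : ℕ, ∫⁻ a, ENNReal.ofReal (min (u a) n) ∂μ ≤ C) :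
    ∫⁻ a, ENNReal.ofReal (u a) ∂μ ≤ C := by
  refine le_of_tendsto' (lintegral_tendsto_of_tendsto_of_monotone
    (fun n => (hu.min aemeasurable_const).ennreal_ofReal)
    (ae_of_all _ fun a i j hij => ?_) (ae_of_all _ fun a => ?_)) hC
  · exact ENNReal.ofReal_le_ofReal (min_le_min_left _ (Nat.cast_le.2 hij))
  · refine tendsto_const_nhds.congr' ?_
    filter_upwards [tendsto_natCast_atTop_atTop.eventually_ge_atTop (u a)] with n hn
    rw [min_eq_left hn]

theorem IsCBSemigroup.lintegral_ofReal_le_of_hasModerateGrowth (hQ : IsCBSemigroup v Q)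
    (hφ : IsBranchingMechanism φ β σ m) (hm : IsFiniteMeanLevyMeasure m) (hv : IsCumulant φ v)
    (hh : HasModerateGrowth h w D) (hw : IntegrableOn w (Ioi 1) m) (htop : Tendsto h atTop atTop)
    (hx : 0 ≤ x) (ht : 0 ≤ t) :
    ∫⁻ y, ENNReal.ofReal (h y) ∂(Q t x) ≤
      ENNReal.ofReal (h (x + 2) * Real.exp (growthRate β σ m w D * t)) := by
  refine lintegral_ofReal_le_of_forall_nat_min_le hh.monotone.measurable.aemeasurable fun n => ?_
  obtain ⟨Y, hY⟩ := (htop.eventually_ge_atTop (n : ℝ)).exists_forall_of_atTop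
  refine (hQ.lintegral_ofReal_le_of_eventually_const hφ hm hv (hh.min_const n.cast_nonneg) hw
    (fun y => min_le_right _ _) (fun y hy => min_eq_right (hY y hy)) hx ht).trans ?_
  gcongr
  exact min_le_left _ _

end ModerateGrowth

section ConditionB

theorem IsBranchingMechanism.isFiniteMeanLevyMeasure {φ : ℝ → ℝ} {β σ : ℝ} {m : Measure ℝ}
    (hφ : IsBranchingMechanism φ β σ m) (hmean : IntegrableOn (fun z => z) (Ioi 1) m) :
    IsFiniteMeanLevyMeasure m := by
  have hpos : ∀ᵐ z ∂m, 0 < z := by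
    rw [ae_iff]
    simp only [not_lt]
    exact hφ.carrier
  have hsmall : Integrable (fun z => min 1 (z ^ 2)) m := by
    refine ⟨(by fun_prop : Continuous fun z : ℝ => min 1 (z ^ 2)).aestronglyMeasurable, ?_⟩
    rw [hasFiniteIntegral_iff_ofReal (.of_forall fun z => by positivity)]
    exact hφ.levy_finite
  refine ⟨hpos, (hsmall.add (hmean.integrable_indicator measurableSet_Ioi)).mono'
    (by fun_prop : Continuous fun z : ℝ => min z (z ^ 2)).aestronglyMeasurable ?_⟩
  filter_upwards [hpos] with z hz
  rw [Real.norm_of_nonneg (le_min hz.le (sq_nonneg z)), Pi.add_apply]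
  rcases le_or_gt z 1 with hz1 | hz1
  · rw [indicator_of_notMem (notMem_Ioi.2 hz1), add_zero, min_eq_right (by nlinarith : z ^ 2 ≤ 1)]
    exact min_le_right _ _
  · rw [indicator_of_mem (mem_Ioi.2 hz1)]
    exact (min_le_left _ _).trans (le_add_of_nonneg_left (by positivity))

theorem continuous_comp_max_of_convexOn_of_monotoneOn {f : ℝ → ℝ} {a : ℝ}
    (hconv : ConvexOn ℝ (Ici a) f) (hmono : MonotoneOn f (Ici a)) :
    Continuous fun y => f (max y a) := by
  have himage : (fun y => max y a) '' univ = Ici a := by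
    rw [image_univ]
    exact Subset.antisymm (range_subset_iff.2 fun y => le_max_right y a)
      fun y hy => ⟨y, max_eq_left hy⟩
  have hmax : ConvexOn ℝ univ fun y : ℝ => max y a :=
    (convexOn_id convex_univ).sup (convexOn_const a convex_univ)
  have hcomp : ConvexOn ℝ univ (f ∘ fun y => max y a) :=
    ConvexOn.comp (himage ▸ hconv) hmax (himage ▸ hmono)
  exact continuousOn_univ.1 (hcomp.continuousOn isOpen_univ)

theorem tendsto_comp_max_of_le_mul {f : ℝ → ℝ} {c : ℝ} (hc : 0 < c)
    (hlin : ∀ y, 0 ≤ y → y ≤ c * f y) :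
    Tendsto (fun y => f (max y 0)) atTop atTop := by
  refine tendsto_atTop_mono' atTop ?_ (tendsto_id.atTop_div_const hc)
  filter_upwards [eventually_ge_atTop 0] with y hy
  rw [max_eq_left hy, id, div_le_iff₀' hc]
  exact hlin y hy

namespace ConditionB

variable {f : ℝ → ℝ} {K a b c x y z : ℝ}

theorem convexOn (hf : ConditionB f K) : ConvexOn ℝ (Ici 0) f :=
  hf.2.1

theorem monotoneOn (hf : ConditionB f K) : MonotoneOn f (Ici 0) :=
  hf.2.2.1

theorem one_lt (hf : ConditionB f K) (hy : 0 ≤ y) : 1 < f y :=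
  hf.2.2.2.2 y hy

theorem pos (hf : ConditionB f K) (hy : 0 ≤ y) : 0 < f y :=
  zero_lt_one.trans (hf.one_lt hy)

theorem mono (hf : ConditionB f K) (hx : 0 ≤ x) (hxy : x ≤ y) : f x ≤ f y :=
  hf.monotoneOn hx (hx.trans hxy) hxy

theorem le_mul_of_le_mul (hf : ConditionB f K) (hx : 0 ≤ x) (ha : 0 ≤ a) (hy : 0 ≤ y)
    (hxy : x ≤ a * y) : f x ≤ K * f a * f y :=
  (hf.mono hx hxy).trans (hf.2.2.2.1 a y ha hy)

theorem exists_pos_le_mul (hf : ConditionB f K) (hb : 0 < b) (hlt : f 0 < f b) :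
    ∃ c, 0 < c ∧ ∀ y, 0 ≤ y → y ≤ c * f y := by
  have hslope : 0 < (f b - f 0) / b := div_pos (sub_pos.2 hlt) hb
  refine ⟨b + ((f b - f 0) / b)⁻¹, by positivity, fun y hy => ?_⟩
  have hfy := hf.pos hy
  rw [add_mul]
  rcases le_total y b with hyb | hby
  · have hb_le : b ≤ b * f y := le_mul_of_one_le_right hb.le (hf.one_lt hy).le
    exact (hyb.trans hb_le).trans (le_add_of_nonneg_right (by positivity))
  · have hy0 : 0 < y := hb.trans_le hby
    have hsecant := hf.convexOn.secant_mono self_mem_Ici hb.le hy hb.ne' hy0.ne' hby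
    rw [sub_zero, sub_zero, le_div_iff₀ hy0] at hsecant
    have hy_le : y ≤ ((f b - f 0) / b)⁻¹ * f y := by
      rw [le_inv_mul_iff₀ hslope]
      exact hsecant.trans (sub_le_self _ (hf.pos le_rfl).le)
    exact hy_le.trans (le_add_of_nonneg_left (by positivity))

theorem integrableOn_Ioi (hf : ConditionB f K) {m : Measure ℝ}
    (hm : ∫⁻ z in Ioi 1, ENNReal.ofReal (f z) ∂m < ⊤) : IntegrableOn f (Ioi 1) m := by
  refine ⟨(aemeasurable_restrict_of_monotoneOn measurableSet_Ioi
    (hf.monotoneOn.mono (Ioi_subset_Ici zero_le_one))).aestronglyMeasurable, ?_⟩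
  rw [hasFiniteIntegral_iff_ofReal]
  · exact hm
  · filter_upwards [ae_restrict_mem measurableSet_Ioi] with z hz
    exact (hf.pos (zero_le_one.trans (mem_Ioi.1 hz).le)).le

-- The secant slope from `y` over `[y, y + 3a]` is at most the one over `[y, 4y]`.
theorem mul_sub_le (hf : ConditionB f K) (ha : 0 < a) (hay : a ≤ y) :
    y * (f (y + 3 * a) - f y) ≤ a * (K * f 4 * f y) := by
  have hy : 0 < y := ha.trans_le hay
  have hsecant := hf.convexOn.secant_mono (a := y) (x := y + 3 * a) (y := 4 * y) hy.le
    (by positivity : 0 ≤ y + 3 * a) (by positivity : 0 ≤ 4 * y) (by linarith) (by linarith)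
    (by linarith)
  rw [div_le_div_iff₀ (by linarith) (by linarith)] at hsecant
  have hdouble : f (4 * y) - f y ≤ K * f 4 * f y :=
    (sub_le_self _ (hf.pos hy.le).le).trans
      (hf.le_mul_of_le_mul (by positivity) (by norm_num) hy.le le_rfl)
  have hscaled := mul_le_mul_of_nonneg_left hdouble ha.le
  linarith

theorem apply_add_three_le (hf : ConditionB f K) (hy : 0 ≤ y) :
    f (y + 3) ≤ (1 + K) * f 4 * f y := by
  have hK := hf.1
  have hf4 : 0 < f 4 := hf.pos (by norm_num)
  have hfy := hf.pos hy
  rcases le_total y 1 with hy1 | hy1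
  · calc f (y + 3) ≤ f 4 := hf.mono (by positivity) (by linarith)
      _ ≤ f 4 * f y := le_mul_of_one_le_right hf4.le (hf.one_lt hy).le
      _ ≤ (1 + K) * f 4 * f y := by
          gcongr
          exact le_mul_of_one_le_left hf4.le (by linarith)
  · calc f (y + 3) ≤ K * f 4 * f y :=
          hf.le_mul_of_le_mul (by positivity) (by norm_num) hy (by linarith)
      _ ≤ (1 + K) * f 4 * f y := by
          gcongr
          linarith

theorem mul_small_increment_le (hf : ConditionB f K) (hy : 0 ≤ y) :
    y * (f (y + 3) - f y) ≤ (1 + K) * f 4 * f y := by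
  rcases le_total y 1 with hy1 | hy1
  · have hincrement : 0 ≤ f (y + 3) - f y := sub_nonneg.2 (hf.mono hy (by linarith))
    calc y * (f (y + 3) - f y) ≤ f (y + 3) - f y := mul_le_of_le_one_left hincrement hy1
      _ ≤ f (y + 3) := sub_le_self _ (hf.pos hy).le
      _ ≤ (1 + K) * f 4 * f y := hf.apply_add_three_le hy
  · have hf4 : 0 < f 4 := hf.pos (by norm_num)
    have hfy := hf.pos hy
    calc y * (f (y + 3) - f y) ≤ K * f 4 * f y := by
          simpa using hf.mul_sub_le zero_lt_one hy1
      _ ≤ (1 + K) * f 4 * f y := by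
          gcongr
          linarith

theorem mul_large_increment_le (hf : ConditionB f K) (hlin : ∀ y, 0 ≤ y → y ≤ c * f y)
    (hy : 0 ≤ y) (hz : 1 < z) :
    y * (f (y + z + 2) - f y) ≤ c * K * f 4 * f z * f y := by
  have hz0 : 0 ≤ z := by linarith
  have hK := hf.1
  have hf4 : 0 < f 4 := hf.pos (by norm_num)
  have hfy := hf.pos hy
  have hfz := hf.pos hz0
  rcases le_total z y with hzy | hyz
  · calc y * (f (y + z + 2) - f y) ≤ y * (f (y + 3 * z) - f y) := by
          gcongr
          exact hf.mono (by positivity) (by linarith)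
      _ ≤ z * (K * f 4 * f y) := hf.mul_sub_le (zero_lt_one.trans hz) hzy
      _ ≤ c * f z * (K * f 4 * f y) := by
          gcongr
          exact hlin z hz0
      _ = c * K * f 4 * f z * f y := by ring
  · have hincrement : f (y + z + 2) - f y ≤ K * f 4 * f z :=
      (sub_le_self _ hfy.le).trans
        (hf.le_mul_of_le_mul (by positivity) (by norm_num) hz0 (by linarith))
    calc y * (f (y + z + 2) - f y) ≤ y * (K * f 4 * f z) := by gcongr
      _ ≤ c * f y * (K * f 4 * f z) := by
          gcongr
          exact hlin y hy
      _ = c * K * f 4 * f z * f y := by ring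

theorem hasModerateGrowth (hf : ConditionB f K) (hc : 0 ≤ c)
    (hlin : ∀ y, 0 ≤ y → y ≤ c * f y) :
    HasModerateGrowth (fun y => f (max y 0)) f ((1 + K + c * K) * f 4) := by
  have hK := hf.1
  have hf4 : 0 < f 4 := hf.pos (by norm_num)
  have hmax : ∀ y : ℝ, 0 ≤ max y 0 := fun y => le_max_right y 0
  refine ⟨continuous_comp_max_of_convexOn_of_monotoneOn hf.convexOn hf.monotoneOn,
    fun x y hxy => hf.mono (hmax x) (max_le_max_right 0 hxy), fun y => (hf.pos (hmax y)).le,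
    by positivity, fun z hz => (hf.pos (zero_le_one.trans hz.le)).le, fun y hy => ?_,
    fun y z hy hz => ?_⟩
  · simp only [max_eq_left hy, max_eq_left (add_nonneg hy zero_le_three)]
    have hfy := hf.pos hy
    refine (hf.mul_small_increment_le hy).trans ?_
    gcongr ?_ * _ * _
    exact le_add_of_nonneg_right (by positivity)
  · have hz0 : 0 ≤ z := zero_le_one.trans hz.le
    have hfz := hf.pos hz0
    have hfy := hf.pos hy
    simp only [max_eq_left hy, max_eq_left (by positivity : 0 ≤ y + z + 2)]
    refine (hf.mul_large_increment_le hlin hy hz).trans ?_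
    gcongr
    exact le_add_of_nonneg_left (by positivity)

end ConditionB

end ConditionB

section MomentBound

variable {f : ℝ → ℝ} {K b β σ t x : ℝ} {m : Measure ℝ} {φ : ℝ → ℝ} {v : ℝ → ℝ → ℝ}
  {Q : ℝ → ℝ → Measure ℝ}

theorem IsCBSemigroup.lintegral_ofReal_le_of_forall_le (hQ : IsCBSemigroup v Q)
    (hf : ConditionB f K) (hconst : ∀ y, 0 < y → f y ≤ f 0) (hx : 0 ≤ x) (ht : 0 ≤ t) :
    ∫⁻ y, ENNReal.ofReal (f y) ∂(Q t x) ≤ ENNReal.ofReal (f x) := by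
  have := (hQ t x ht hx).1
  calc ∫⁻ y, ENNReal.ofReal (f y) ∂(Q t x) ≤ ∫⁻ _, ENNReal.ofReal (f x) ∂(Q t x) := by
        refine lintegral_mono_ae ((hQ.ae_nonneg ht hx).mono fun y hy => ?_)
        refine ENNReal.ofReal_le_ofReal (le_trans ?_ (hf.mono le_rfl hx))
        exact hy.eq_or_lt.elim (fun h => h ▸ le_rfl) (hconst y)
    _ = ENNReal.ofReal (f x) := by rw [lintegral_const, measure_univ, mul_one]

theorem IsCBSemigroup.exists_lintegral_ofReal_le_of_lt (hQ : IsCBSemigroup v Q)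
    (hf : ConditionB f K) (hφ : IsBranchingMechanism φ β σ m)
    (hm : ∫⁻ z in Ioi 1, ENNReal.ofReal (f z) ∂m < ⊤) (hv : IsCumulant φ v)
    (hb : 0 < b) (hlt : f 0 < f b) :
    ∃ B, ∀ x t, 0 ≤ x → 0 ≤ t →
      ∫⁻ y, ENNReal.ofReal (f y) ∂(Q t x) ≤
        ENNReal.ofReal ((1 + K) * f 4 * f x * Real.exp (B * t)) := by
  obtain ⟨c, hc, hlin⟩ := hf.exists_pos_le_mul hb hlt
  have hf_int : IntegrableOn f (Ioi 1) m := hf.integrableOn_Ioi hm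
  have hmean : IntegrableOn (fun z => z) (Ioi 1) m := by
    refine (hf_int.const_mul c).mono' measurable_id.aestronglyMeasurable ?_
    filter_upwards [ae_restrict_mem measurableSet_Ioi] with z hz
    have hz0 : 0 ≤ z := zero_le_one.trans (mem_Ioi.1 hz).le
    rw [Real.norm_of_nonneg hz0]
    exact hlin z hz0
  have hgrowth := hf.hasModerateGrowth hc.le hlin
  refine ⟨growthRate β σ m f ((1 + K + c * K) * f 4), fun x t hx ht => ?_⟩
  calc ∫⁻ y, ENNReal.ofReal (f y) ∂(Q t x)
      = ∫⁻ y, ENNReal.ofReal (f (max y 0)) ∂(Q t x) :=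
        lintegral_congr_ae ((hQ.ae_nonneg ht hx).mono fun y hy => by simp only [max_eq_left hy])
    _ ≤ ENNReal.ofReal (f (max (x + 2) 0) *
          Real.exp (growthRate β σ m f ((1 + K + c * K) * f 4) * t)) :=
        hQ.lintegral_ofReal_le_of_hasModerateGrowth hφ (hφ.isFiniteMeanLevyMeasure hmean) hv
          hgrowth hf_int (tendsto_comp_max_of_le_mul hc hlin) hx ht
    _ ≤ _ := by
        gcongr
        rw [max_eq_left (by positivity)]
        exact (hf.mono (by positivity) (by linarith)).trans (hf.apply_add_three_le hx)

theorem lt_top_and_locally_bounded_of_le_ofReal {F : ℝ → ENNReal} {G : ℝ → ℝ}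
    (hG : Continuous G) (hFG : ∀ t, 0 ≤ t → F t ≤ ENNReal.ofReal (G t)) :
    (∀ t, 0 ≤ t → F t < ⊤) ∧
      ∀ T, 0 < T → ∃ C : ℝ, ∀ t ∈ Icc 0 T, F t ≤ ENNReal.ofReal C := by
  refine ⟨fun t ht => (hFG t ht).trans_lt ENNReal.ofReal_lt_top, fun T _ => ?_⟩
  obtain ⟨C, hC⟩ := isCompact_Icc.bddAbove_image (hG.continuousOn (s := Icc 0 T))
  exact ⟨C, fun t ht => (hFG t ht.1).trans
    (ENNReal.ofReal_le_ofReal (hC (mem_image_of_mem G ht)))⟩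

theorem cb_f_moment_locally_bounded_general (hf : ConditionB f K)
    (hφ : IsBranchingMechanism φ β σ m) (hm : ∫⁻ z in Ioi 1, ENNReal.ofReal (f z) ∂m < ⊤)
    (hv : IsCumulant φ v) (hQ : IsCBSemigroup v Q) :
    ∃ A B, ∀ x t, 0 ≤ x → 0 ≤ t →
      ∫⁻ z, ENNReal.ofReal (f z) ∂(Q t x) ≤ ENNReal.ofReal (A * f x * Real.exp (B * t)) := by
  by_cases hconst : ∀ y, 0 < y → f y ≤ f 0
  · refine ⟨1, 0, fun x t hx ht => ?_⟩
    simpa using hQ.lintegral_ofReal_le_of_forall_le hf hconst hx ht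
  · push Not at hconst
    obtain ⟨b, hb, hlt⟩ := hconst
    exact ⟨_, hQ.exists_lintegral_ofReal_le_of_lt hf hφ hm hv hb hlt⟩

end MomentBound

/-- Proposition 3.9: if `∫_{(1,∞)} f(z) m(dz) < ∞`, then for every `x ≥ 0` the
function `t ↦ ∫ f dQ_t(x,·)` is finite and locally bounded on `[0,∞)`. -/
theorem cb_f_moment_locally_bounded
    (f : ℝ → ℝ) (K : ℝ) (hf : ConditionB f K)
    (φ : ℝ → ℝ) (β σ : ℝ) (m : Measure ℝ)
    (hφ : IsBranchingMechanism φ β σ m) (hGrey : GreyCondition φ)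
    (hm : (∫⁻ z in Set.Ioi 1, ENNReal.ofReal (f z) ∂m) < ⊤)
    (v : ℝ → ℝ → ℝ) (hv : IsCumulant φ v)
    (Q : ℝ → ℝ → Measure ℝ) (hQ : IsCBSemigroup v Q)
    (x : ℝ) (hx : 0 ≤ x) :
    (∀ t, 0 ≤ t → (∫⁻ z, ENNReal.ofReal (f z) ∂(Q t x)) < ⊤) ∧
      ∀ T, 0 < T → ∃ C : ℝ, ∀ t ∈ Set.Icc (0:ℝ) T,
        (∫⁻ z, ENNReal.ofReal (f z) ∂(Q t x)) ≤ ENNReal.ofReal C := by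
  obtain ⟨A, B, hAB⟩ := cb_f_moment_locally_bounded_general hf hφ hm hv hQ
  exact lt_top_and_locally_bounded_of_le_ofReal (by fun_prop) fun t ht => hAB x t hx ht
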